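/- arXiv:1710.02995 — 2 statements merged into one kernel-verified Lean document; each statement's English description precedes it below -/
import Mathlib

section
/- There exist a constant C > 0 and x₀ ≥ 1 such that for all real x ≥ x₀, |M(x) − (π²/4)·x − x^{1/2}·Q(√x)| ≤ C·x^{1/4}, where M(x) = Σ_{m ∈ ℕ, m ≤ √x} r₂(m)·(x − m²)^{1/2} and Q(√x) = x^{−1/2}·(S(√x; 0) − (2^{3/2}π/3)·x). -/
open Real

/-- `r₂(m)`: the number of representations of `m` as a sum of two squares of integers. -/
noncomputable def r2 (m : ℕ) : ℕ :=
  Set.ncard {p : ℤ × ℤ | p.1 ^ 2 + p.2 ^ 2 = (m : ℤ)}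

/-- `M(x) = Σ_{m ∈ ℕ, m ≤ √x} r₂(m)·(x − m²)^{1/2}`. -/
noncomputable def M (x : ℝ) : ℝ :=
  ∑ m ∈ Finset.range (⌊Real.sqrt x⌋₊ + 1),
    (r2 m : ℝ) * (x - (m : ℝ) ^ 2) ^ ((1 : ℝ) / 2)

/-- `S(√x; 0) = √2·x^{1/4}·Σ_{m ∈ ℕ, m ≤ √x} r₂(m)·(√x − m)^{1/2}`. -/
noncomputable def Sx0 (x : ℝ) : ℝ :=
  Real.sqrt 2 * x ^ ((1 : ℝ) / 4) *
    ∑ m ∈ Finset.range (⌊Real.sqrt x⌋₊ + 1),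
      (r2 m : ℝ) * (Real.sqrt x - m) ^ ((1 : ℝ) / 2)

/-- `Q(√x) = x^{−1/2}·(S(√x; 0) − (2^{3/2}π/3)·x)`. -/
noncomputable def Q (x : ℝ) : ℝ :=
  x ^ (-(1 : ℝ) / 2) * (Sx0 x - 2 ^ ((3 : ℝ) / 2) * Real.pi / 3 * x)

open MeasureTheory Set Filter Topology FourierTransform

noncomputable def gg (s : ℝ) : ℝ := (max s 0) ^ ((3:ℝ)/2)

lemma gg_cont : Continuous gg := by
  unfold gg
  exact (continuous_id.max continuous_const).rpow_const (fun _ => Or.inr (by norm_num))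

lemma gg_zero {s : ℝ} (h : s ≤ 0) : gg s = 0 := by
  unfold gg
  rw [max_eq_right h, Real.zero_rpow (by norm_num)]

lemma gg_supp (s b : ℝ) (hb : b ∉ Ioc (-√s) (√s)) : gg (s - b^2) = 0 := by
  apply gg_zero
  rcases le_or_gt s 0 with h | h
  · nlinarith [sq_nonneg b]
  · have h1 := Real.sq_sqrt h.le
    have h2 := Real.sqrt_nonneg s
    by_contra hh
    push Not at hh
    apply hb
    constructor
    · nlinarith
    · nlinarith

lemma int_gg (s : ℝ) : ∫ b : ℝ, gg (s - b^2) = 3 * π / 8 * (max s 0)^2 := by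
  rcases le_or_gt s 0 with h | h
  · have : ∀ b : ℝ, gg (s - b^2) = 0 := fun b => gg_zero (by nlinarith [sq_nonneg b])
    simp [this, max_eq_right h]
  · rw [max_eq_left h.le]
    have h0 := Real.sqrt_nonneg s
    have h00 := Real.sq_sqrt h.le
    rw [← setIntegral_eq_integral_of_forall_compl_eq_zero (gg_supp s),
      ← intervalIntegral.integral_of_le (by linarith)]
    have key := intervalIntegral.integral_comp_mul_deriv (a := -(π/2)) (b := π/2)
      (f := fun θ => √s * sin θ) (f' := fun θ => √s * cos θ) (g := fun b => gg (s - b^2))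
      (fun x _ => (Real.hasDerivAt_sin x).const_mul _) (by fun_prop)
      (gg_cont.comp (by fun_prop))
    simp only [sin_neg, sin_pi_div_two, mul_neg, mul_one] at key
    rw [← key]
    have : ∀ θ ∈ uIcc (-(π/2)) (π/2), ((fun b => gg (s - b^2)) ∘ fun θ => √s * sin θ) θ * (√s * cos θ)
        = s^2 * cos θ ^ 4 := by
      intro θ hθ
      rw [uIcc_of_le (by linarith [pi_pos])] at hθ
      have hc : 0 ≤ cos θ := cos_nonneg_of_mem_Icc hθ
      simp only [Function.comp, gg]
      have e : s - (√s * sin θ)^2 = (√s * cos θ)^2 := by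
        rw [mul_pow, mul_pow, h00, cos_sq']; ring
      rw [e, max_eq_left (sq_nonneg _), ← Real.rpow_natCast, ← Real.rpow_mul (by positivity)]
      norm_num
      have : ((√s * cos θ) ^ 3) * (√s * cos θ) = (√s^2)^2 * cos θ ^ 4 := by ring
      rw [h00] at this
      rw [← this]
    rw [intervalIntegral.integral_congr this, intervalIntegral.integral_const_mul]
    have := @integral_cos_pow (-(π/2)) (π/2) 2
    norm_num [integral_cos_sq] at this
    rw [this]
    ring

lemma osc_bound (R lam : ℝ) (hR : 0 < R) (hl : lam ≠ 0) :
    ‖∫ a in (-R)..R, Complex.exp ((lam * a : ℝ) * Complex.I) * (((R^2 - a^2)^2 : ℝ) : ℂ)‖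
      ≤ 64 * R^2 / |lam|^3 := by
  set w : ℂ := lam * Complex.I with hw
  have hw0 : w ≠ 0 := by simp [hw, hl]
  have nw : ‖w‖ = |lam| := by simp [hw]
  have ne : ∀ a : ℝ, ‖Complex.exp (w * a)‖ = 1 := by
    intro a
    rw [show w * a = ((lam * a : ℝ) : ℂ) * Complex.I by push_cast; rw [hw]; ring]
    exact Complex.norm_exp_ofReal_mul_I _
  have hd : ∀ a ∈ uIcc (-R) R, HasDerivAt (fun a : ℝ => Complex.exp (w * a) *
      (((R:ℂ)^2 - (a:ℂ)^2)^2 / w - (-4 * a * ((R:ℂ)^2 - (a:ℂ)^2)) / w^2 + (-4 * (R:ℂ)^2 + 12 * (a:ℂ)^2) / w^3))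
      (Complex.exp (w * a) * ((R:ℂ)^2 - (a:ℂ)^2)^2 + Complex.exp (w * a) * (24 * a) / w^3) a := by
    intro a _
    have h := HasDerivAt.comp_ofReal (z := a) (e := fun z : ℂ => Complex.exp (w * z) *
      (((R:ℂ)^2 - z^2)^2 / w - (-4 * z * ((R:ℂ)^2 - z^2)) / w^2 + (-4 * (R:ℂ)^2 + 12 * z^2) / w^3))
      (e' := (Complex.exp (w * a) * ((R:ℂ)^2 - (a:ℂ)^2)^2 + Complex.exp (w * a) * (24 * a) / w^3)) ?_
    · exact h
    have h1 : HasDerivAt (fun z : ℂ => Complex.exp (w * z)) (Complex.exp (w * a) * w) (a:ℂ) := by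
      simpa using ((hasDerivAt_id (a:ℂ)).const_mul w).cexp
    have h2 : HasDerivAt (fun z : ℂ => (R:ℂ)^2 - z^2) (-(2 * a)) (a:ℂ) := by
      simpa using (hasDerivAt_pow 2 (a:ℂ)).const_sub ((R:ℂ)^2)
    have h3 : HasDerivAt (fun z : ℂ => (12:ℂ) * z^2) (12 * (2 * a)) (a:ℂ) := by
      simpa using (hasDerivAt_pow 2 (a:ℂ)).const_mul (12:ℂ)
    have h4 : HasDerivAt (fun z : ℂ => (-4:ℂ) * z) (-4) (a:ℂ) := by
      simpa using (hasDerivAt_id (a:ℂ)).const_mul (-4:ℂ)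
    have := h1.mul ((((h2.pow 2).div_const w).sub ((h4.mul h2).div_const (w^2))).add
      ((h3.const_add (-4 * (R:ℂ)^2)).div_const (w^3)))
    convert! this using 1
    simp
    field_simp
    ring
  have ftc := intervalIntegral.integral_eq_sub_of_hasDerivAt hd
    (Continuous.intervalIntegrable (by fun_prop) _ _)
  rw [intervalIntegral.integral_add (Continuous.intervalIntegrable (by fun_prop) _ _)
    (Continuous.intervalIntegrable (by fun_prop) _ _)] at ftc
  have e1 : ∫ a in (-R)..R, Complex.exp ((lam * a : ℝ) * Complex.I) * (((R^2 - a^2)^2 : ℝ) : ℂ)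
     = ∫ a in (-R)..R, Complex.exp (w * a) * ((R:ℂ)^2 - (a:ℂ)^2)^2 := by
    congr 1; ext a; push_cast; rw [hw]; ring_nf
  rw [e1, eq_sub_of_add_eq ftc]
  have b1 : ‖∫ a in (-R)..R, Complex.exp (w * a) * (24 * a) / w^3‖ ≤ (24 * R / |lam|^3) * |R - -R| := by
    apply intervalIntegral.norm_integral_le_of_norm_le_const
    intro a ha
    rw [uIoc_of_le (by linarith)] at ha
    rw [norm_div, norm_mul, ne, norm_pow, nw, one_mul, norm_mul]
    simp only [Complex.norm_ofNat, Complex.norm_real]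
    gcongr
    exact abs_le.2 ⟨ha.1.le, ha.2⟩
  rw [abs_of_nonneg (by linarith : (0:ℝ) ≤ R - -R)] at b1
  have b2 : ∀ a : ℝ, a^2 = R^2 → ‖Complex.exp (w * a) *
      (((R:ℂ)^2 - (a:ℂ)^2)^2 / w - (-4 * a * ((R:ℂ)^2 - (a:ℂ)^2)) / w^2 + (-4 * (R:ℂ)^2 + 12 * (a:ℂ)^2) / w^3)‖
      ≤ 8 * R^2 / |lam|^3 := by
    intro a ha
    have ha' : (a:ℂ)^2 = (R:ℂ)^2 := by exact_mod_cast ha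
    rw [norm_mul, ne, ha', show (((R:ℂ)^2 - (R:ℂ)^2)^2 / w - (-4 * a * ((R:ℂ)^2 - (R:ℂ)^2)) / w^2 + (-4 * (R:ℂ)^2 + 12 * (R:ℂ)^2) / w^3) = 8 * (R:ℂ)^2 / w^3 by ring]
    simp [nw]
  refine (norm_sub_le _ _).trans ((add_le_add (norm_sub_le _ _) le_rfl).trans ?_)
  refine (add_le_add (add_le_add (b2 R rfl) (b2 (-R) (by ring))) b1).trans (le_of_eq ?_)
  ring

noncomputable def Gf (R : ℝ) (z : ℂ) : ℂ := ((gg (R^2 - ‖z‖^2) : ℝ) : ℂ)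

lemma Gf_rot (R : ℝ) (w : ℂ) : 𝓕 (Gf R) w = 𝓕 (Gf R) (‖w‖ : ℂ) := by
  have hw : (Circle.exp (Complex.arg w) : ℂ) * (‖w‖ : ℂ) = w := by
    rw [Circle.coe_exp, mul_comm]; exact Complex.norm_mul_exp_arg_mul_I w
  have h := Real.fourier_comp_linearIsometry (rotation (Circle.exp (Complex.arg w))) (Gf R) (‖w‖ : ℂ)
  rw [rotation_apply, hw] at h
  rw [← h]
  have : Gf R ∘ (rotation (Circle.exp (Complex.arg w))) = Gf R := by
    funext z
    simp [Gf]
  rw [this]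

lemma gg_supp2 (R a b : ℝ) (hR : 0 < R) (h : R ≤ |a| ∨ R ≤ |b|) : gg (R^2 - a^2 - b^2) = 0 := by
  apply gg_zero
  rcases h with h | h
  · nlinarith [sq_abs a, sq_nonneg b, abs_nonneg a]
  · nlinarith [sq_abs b, sq_nonneg a, abs_nonneg b]

lemma integrable_two (R : ℝ) (hR : 0 < R) (e : ℝ × ℝ → ℂ) (he : Continuous e) :
    Integrable (fun p : ℝ × ℝ => e p * ((gg (R^2 - p.1^2 - p.2^2) : ℝ) : ℂ)) := by
  apply Continuous.integrable_of_hasCompactSupport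
  · exact he.mul (Complex.continuous_ofReal.comp (gg_cont.comp (by fun_prop)))
  · apply HasCompactSupport.intro (K := Icc (-R) R ×ˢ Icc (-R) R) (isCompact_Icc.prod isCompact_Icc)
    intro p hp
    rw [gg_supp2 R p.1 p.2 hR, Complex.ofReal_zero, mul_zero]
    by_contra hh
    push Not at hh
    apply hp
    exact ⟨abs_le.1 hh.1.le, abs_le.1 hh.2.le⟩

lemma Gf_fub (R : ℝ) (hR : 0 < R) (k l : ℝ) : 𝓕 (Gf R) (⟨k, l⟩ : ℂ) =
    ∫ a : ℝ, Complex.exp (((-2 * π * a * k : ℝ) : ℂ) * Complex.I) *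
      ∫ b : ℝ, Complex.exp (((-2 * π * b * l : ℝ) : ℂ) * Complex.I) * ((gg (R^2 - a^2 - b^2) : ℝ) : ℂ) := by
  rw [Real.fourier_eq', ← (Complex.volume_preserving_equiv_real_prod.symm).integral_comp
    Complex.measurableEquivRealProd.symm.measurableEmbedding]
  have e : ∀ p : ℝ × ℝ, Complex.exp (((-2 * π * inner ℝ (Complex.measurableEquivRealProd.symm p) (⟨k, l⟩ : ℂ) : ℝ) : ℂ) * Complex.I) • Gf R (Complex.measurableEquivRealProd.symm p)
     = (Complex.exp (((-2 * π * p.1 * k : ℝ) : ℂ) * Complex.I) * Complex.exp (((-2 * π * p.2 * l : ℝ) : ℂ) * Complex.I)) * ((gg (R^2 - p.1^2 - p.2^2) : ℝ) : ℂ) := by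
    intro p
    rw [← Complex.exp_add, smul_eq_mul, Gf]
    congr 2
    · rw [Complex.measurableEquivRealProd_symm_apply, Complex.inner]
      simp
      ring
    · rw [Complex.measurableEquivRealProd_symm_apply, Complex.sq_norm, Complex.normSq_mk]
      congr 1; ring
  simp_rw [e]
  rw [Measure.volume_eq_prod, integral_prod]
  · congr 1; ext a
    rw [← integral_const_mul]
    congr 1; ext b
    simp only [mul_assoc]
  · have := integrable_two R hR (fun p => Complex.exp (((-2 * π * p.1 * k : ℝ) : ℂ) * Complex.I) * Complex.exp (((-2 * π * p.2 * l : ℝ) : ℂ) * Complex.I)) (by fun_prop)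
    rwa [Measure.volume_eq_prod] at this

lemma Gf_axis (R : ℝ) (hR : 0 < R) (r : ℝ) : 𝓕 (Gf R) (r : ℂ) = ((3 * π / 8 : ℝ) : ℂ) *
    ∫ a in (-R)..R, Complex.exp (((-2 * π * r) * a : ℝ) * Complex.I) * (((R^2 - a^2)^2 : ℝ) : ℂ) := by
  have := Gf_fub R hR r 0
  rw [show (⟨r, 0⟩ : ℂ) = (r : ℂ) from rfl] at this
  rw [this]
  simp only [mul_zero, Complex.ofReal_zero, zero_mul, Complex.exp_zero, one_mul]
  have h2 : ∀ a : ℝ, ∫ b : ℝ, ((gg (R^2 - a^2 - b^2) : ℝ) : ℂ) = ((3 * π / 8 * (max (R^2 - a^2) 0)^2 : ℝ) : ℂ) := by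
    intro a
    rw [integral_complex_ofReal, int_gg]
  simp_rw [h2]
  rw [← setIntegral_eq_integral_of_forall_compl_eq_zero (s := Ioc (-R) R),
      ← intervalIntegral.integral_of_le (by linarith), ← intervalIntegral.integral_const_mul]
  · apply intervalIntegral.integral_congr
    intro a ha
    rw [uIcc_of_le (by linarith)] at ha
    simp only
    rw [max_eq_left (by nlinarith [ha.1, ha.2])]
    push_cast
    ring_nf
  · intro a ha
    rw [max_eq_right]
    · simp
    · by_contra hh
      push Not at hh
      exact ha ⟨by nlinarith, by nlinarith⟩

lemma Gf_bound (R : ℝ) (hR : 0 < R) (w : ℂ) (hw : w ≠ 0) : ‖𝓕 (Gf R) w‖ ≤ R^2 / ‖w‖^3 := by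
  have hn : 0 < ‖w‖ := norm_pos_iff.2 hw
  rw [Gf_rot, Gf_axis R hR, norm_mul, Complex.norm_real, Real.norm_of_nonneg (by positivity)]
  have h := osc_bound R (-2 * π * ‖w‖) hR (by
    have := pi_pos; positivity)
  refine (mul_le_mul_of_nonneg_left h (by positivity)).trans ?_
  have : |(-2 * π * ‖w‖)| = 2 * π * ‖w‖ := by
    rw [show -2 * π * ‖w‖ = -(2 * π * ‖w‖) by ring, abs_neg, abs_of_pos (by positivity)]
  rw [this]
  have e : 3 * π / 8 * (64 * R ^ 2 / (2 * π * ‖w‖) ^ 3) = (3 / π^2) * (R^2 / ‖w‖^3) := by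
    field_simp; ring
  rw [e]
  apply mul_le_of_le_one_left (by positivity)
  rw [div_le_one (by positivity)]
  nlinarith [pi_gt_three]

lemma Gf_zero (R : ℝ) (hR : 0 < R) : 𝓕 (Gf R) 0 = ((2 * π / 5 * R^5 : ℝ) : ℂ) := by
  have := Gf_axis R hR 0
  rw [Complex.ofReal_zero] at this
  rw [this]
  simp only [mul_zero, zero_mul, Complex.ofReal_zero, Complex.exp_zero, one_mul]
  rw [intervalIntegral.integral_ofReal, ← Complex.ofReal_mul]
  congr 1
  have : ∀ a : ℝ, (R^2 - a^2)^2 = R^4 - 2 * R^2 * a^2 + a^4 := by intro a; ring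
  simp_rw [this]
  rw [intervalIntegral.integral_add (Continuous.intervalIntegrable (by fun_prop) _ _)
    (Continuous.intervalIntegrable (by fun_prop) _ _), intervalIntegral.integral_sub (Continuous.intervalIntegrable (by fun_prop) _ _)
    (Continuous.intervalIntegrable (by fun_prop) _ _)]
  simp
  ring

noncomputable def uu (k : ℤ) : ℝ := (max |(k:ℝ)| 1) ^ (-(3:ℝ)/2)

lemma uu_pos (k : ℤ) : 0 < uu k := by unfold uu; positivity

lemma uu_summable : Summable uu := by
  have h : Summable (fun k : ℤ => |(k:ℝ)| ^ (-(3:ℝ)/2)) := by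
    have := Real.summable_abs_int_rpow (b := 3/2) (by norm_num)
    convert this using 3
    norm_num
  have h2 : Summable (fun k : ℤ => if k = 0 then (1:ℝ) else 0) :=
    (hasSum_ite_eq (0:ℤ) (1:ℝ)).summable
  refine Summable.of_nonneg_of_le (fun k => (uu_pos k).le) (fun k => ?_) (h.add h2)
  unfold uu
  by_cases hk : k = 0
  · subst hk; simp
  · have : (1:ℝ) ≤ |(k:ℝ)| := by exact_mod_cast Int.one_le_abs hk
    rw [max_eq_left this]; simp [hk]

lemma uu_bound (k l : ℤ) (h : (⟨k, l⟩ : ℂ) ≠ 0) : 1 / ‖(⟨k, l⟩ : ℂ)‖^3 ≤ uu k * uu l := by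
  set n := ‖(⟨k, l⟩ : ℂ)‖ with hn
  have hk : |(k:ℝ)| ≤ n := Complex.abs_re_le_norm (⟨k, l⟩ : ℂ)
  have hl : |(l:ℝ)| ≤ n := Complex.abs_im_le_norm (⟨k, l⟩ : ℂ)
  have h1 : 1 ≤ n := by
    by_cases hk0 : k = 0
    · have : l ≠ 0 := by
        rintro rfl; apply h; subst hk0; apply Complex.ext <;> simp
      have : (1:ℝ) ≤ |(l:ℝ)| := by exact_mod_cast Int.one_le_abs this
      linarith
    · have : (1:ℝ) ≤ |(k:ℝ)| := by exact_mod_cast Int.one_le_abs hk0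
      linarith
  have hn0 : 0 < n := by linarith
  have key : ∀ m : ℤ, |(m:ℝ)| ≤ n → n ^ (-(3:ℝ)/2) ≤ uu m := by
    intro m hm
    unfold uu
    apply Real.rpow_le_rpow_of_nonpos (by positivity) (max_le hm h1) (by norm_num)
  calc 1 / n^3 = n ^ (-(3:ℝ)/2) * n ^ (-(3:ℝ)/2) := by
        rw [← Real.rpow_add hn0]
        norm_num
    _ ≤ _ := mul_le_mul (key k hk) (key l hl) (by positivity) (uu_pos k).le

noncomputable def err (R : ℝ) (k l : ℤ) : ℂ :=
  𝓕 (Gf R) (⟨k, l⟩ : ℂ) - if k = 0 ∧ l = 0 then ((2 * π / 5 * R^5 : ℝ) : ℂ) else 0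

lemma err_bound (R : ℝ) (hR : 0 < R) (k l : ℤ) : ‖err R k l‖ ≤ R^2 * (uu k * uu l) := by
  unfold err
  by_cases h : k = 0 ∧ l = 0
  · rw [if_pos h]
    have : (⟨(k:ℝ), (l:ℝ)⟩ : ℂ) = 0 := by apply Complex.ext <;> simp [h.1, h.2]
    rw [this, Gf_zero R hR, sub_self, norm_zero]
    have := uu_pos k; have := uu_pos l; positivity
  · rw [if_neg h, sub_zero]
    have hne : (⟨(k:ℝ), (l:ℝ)⟩ : ℂ) ≠ 0 := by
      intro h0
      apply h
      rw [Complex.ext_iff] at h0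
      simpa using h0
    refine (Gf_bound R hR _ hne).trans ?_
    rw [div_eq_mul_one_div]
    exact mul_le_mul_of_nonneg_left (uu_bound k l hne) (by positivity)

lemma poisson_cpt (f : ℝ → ℂ) (hc : Continuous f) (R : ℝ) (hs : ∀ x, R ≤ |x| → f x = 0)
    (hsum : Summable fun n : ℤ => 𝓕 f n) : ∑' n : ℤ, f n = ∑' n : ℤ, 𝓕 f n := by
  have hO : f =O[cocompact ℝ] (fun x => |x| ^ (-(2:ℝ))) := by
    apply Asymptotics.IsBigO.of_bound 1
    have : ∀ᶠ x : ℝ in cocompact ℝ, R ≤ ‖x‖ := tendsto_norm_cocompact_atTop.eventually_ge_atTop R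
    filter_upwards [this] with x hx
    rw [hs x hx, norm_zero]; positivity
  have := Real.tsum_eq_tsum_fourier_of_rpow_decay_of_summable hc (by norm_num) hO hsum 0
  simpa using this

noncomputable def HH (R : ℝ) (l : ℤ) (a : ℝ) : ℂ :=
  ∫ b : ℝ, Complex.exp (((-2 * π * b * l : ℝ) : ℂ) * Complex.I) * ((gg (R^2 - a^2 - b^2) : ℝ) : ℂ)

lemma HH_cont (R : ℝ) (hR : 0 < R) (l : ℤ) : Continuous (HH R l) := by
  have : HH R l = fun a => ∫ b in Icc (-R) R, Complex.exp (((-2 * π * b * l : ℝ) : ℂ) * Complex.I) * ((gg (R^2 - a^2 - b^2) : ℝ) : ℂ) := by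
    funext a
    rw [HH, setIntegral_eq_integral_of_forall_compl_eq_zero]
    intro b hb
    rw [gg_supp2 R a b hR, Complex.ofReal_zero, mul_zero]
    by_contra hh
    push Not at hh
    exact hb (abs_le.1 hh.2.le)
  rw [this]
  apply continuous_parametric_integral_of_continuous
  · have h1 : Continuous (fun p : ℝ × ℝ => ((gg (R^2 - p.1^2 - p.2^2) : ℝ) : ℂ)) :=
      Complex.continuous_ofReal.comp (gg_cont.comp (by fun_prop))
    have h2 : Continuous (fun p : ℝ × ℝ => Complex.exp (((-2 * π * p.2 * l : ℝ) : ℂ) * Complex.I)) := by fun_prop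
    exact h2.mul h1
  · exact isCompact_Icc

lemma HH_supp (R : ℝ) (hR : 0 < R) (l : ℤ) (a : ℝ) (ha : R ≤ |a|) : HH R l a = 0 := by
  unfold HH
  simp [gg_supp2 R a _ hR (Or.inl ha)]

lemma HH_fourier (R : ℝ) (hR : 0 < R) (l k : ℤ) : 𝓕 (HH R l) k = 𝓕 (Gf R) (⟨k, l⟩ : ℂ) := by
  rw [Gf_fub R hR, Real.fourier_real_eq_integral_exp_smul]
  rfl

lemma err_hasSum (R : ℝ) (hR : 0 < R) (l : ℤ) : Summable (fun k => err R k l) := by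
  refine Summable.of_norm_bounded (g := fun k => R^2 * (uu k * uu l)) ?_ (fun k => err_bound R hR k l)
  exact (uu_summable.mul_right _).mul_left _

lemma Gf_hasSum (R : ℝ) (hR : 0 < R) (l : ℤ) : HasSum (fun k : ℤ => 𝓕 (Gf R) (⟨k, l⟩ : ℂ))
    ((∑' k, err R k l) + if l = 0 then ((2 * π / 5 * R^5 : ℝ) : ℂ) else 0) := by
  have h := (err_hasSum R hR l).hasSum.add
    (hasSum_ite_eq (0:ℤ) (if l = 0 then ((2 * π / 5 * R^5 : ℝ) : ℂ) else 0))
  convert h using 2 with k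
  unfold err
  by_cases h1 : k = 0 <;> by_cases h2 : l = 0 <;> simp [h1, h2]

noncomputable def UU : ℝ := ∑' k, uu k

lemma err_tsum_bound (R : ℝ) (hR : 0 < R) (l : ℤ) : ‖∑' k, err R k l‖ ≤ R^2 * (UU * uu l) := by
  refine tsum_of_norm_bounded (g := fun k => R^2 * (uu k * uu l)) ?_ (fun k => err_bound R hR k l)
  exact (uu_summable.hasSum.mul_right _).mul_left _

lemma HH_tsum (R : ℝ) (hR : 0 < R) (l : ℤ) : ∑' a : ℤ, HH R l a =
    (∑' k, err R k l) + if l = 0 then ((2 * π / 5 * R^5 : ℝ) : ℂ) else 0 := by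
  rw [poisson_cpt _ (HH_cont R hR l) R (HH_supp R hR l)]
  · simp_rw [HH_fourier R hR]
    exact (Gf_hasSum R hR l).tsum_eq
  · simp_rw [HH_fourier R hR]
    exact (Gf_hasSum R hR l).summable

noncomputable def KK (R : ℝ) (N : ℕ) (b : ℝ) : ℂ :=
  ∑ a ∈ Finset.Icc (-(N:ℤ)) N, ((gg (R^2 - (a:ℝ)^2 - b^2) : ℝ) : ℂ)

lemma not_mem_Icc {N : ℕ} {R : ℝ} (hN : R ≤ N) (a : ℤ) (ha : a ∉ Finset.Icc (-(N:ℤ)) N) :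
    R ≤ |(a:ℝ)| := by
  have : (N:ℤ) ≤ |a| := by
    by_contra h
    push Not at h
    exact ha (Finset.mem_Icc.2 (abs_le.1 h.le))
  have : (N:ℝ) ≤ |(a:ℝ)| := by exact_mod_cast this
  linarith

lemma KK_fourier (R : ℝ) (hR : 0 < R) (N : ℕ) (hN : R ≤ N) (l : ℤ) : 𝓕 (KK R N) l =
    (∑' k, err R k l) + if l = 0 then ((2 * π / 5 * R^5 : ℝ) : ℂ) else 0 := by
  rw [← HH_tsum R hR l, tsum_eq_sum (s := Finset.Icc (-(N:ℤ)) N)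
    (fun a ha => HH_supp R hR l a (not_mem_Icc hN a ha)), Real.fourier_real_eq_integral_exp_smul]
  unfold KK HH
  rw [← integral_finsetSum]
  · congr 1; ext b
    rw [smul_eq_mul, Finset.mul_sum]
  · intro a _
    apply Continuous.integrable_of_hasCompactSupport
    · have h1 : Continuous (fun b : ℝ => ((gg (R^2 - (a:ℝ)^2 - b^2) : ℝ) : ℂ)) :=
        Complex.continuous_ofReal.comp (gg_cont.comp (by fun_prop))
      have h2 : Continuous (fun b : ℝ => Complex.exp (((-2 * π * b * l : ℝ) : ℂ) * Complex.I)) := by fun_prop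
      exact h2.mul h1
    · apply HasCompactSupport.intro (K := Icc (-R) R) isCompact_Icc
      intro b hb
      rw [gg_supp2 R a b hR, Complex.ofReal_zero, mul_zero]
      by_contra hh
      push Not at hh
      exact hb (abs_le.1 hh.2.le)

lemma lattice_bound (R : ℝ) (hR : 0 < R) (N : ℕ) (hN : R ≤ N) :
    |(∑ b ∈ Finset.Icc (-(N:ℤ)) N, ∑ a ∈ Finset.Icc (-(N:ℤ)) N, gg (R^2 - (a:ℝ)^2 - (b:ℝ)^2))
      - 2 * π / 5 * R^5| ≤ UU^2 * R^2 := by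
  have hbd : HasSum (fun l => R^2 * (UU * uu l)) (R^2 * (UU * UU)) :=
    (uu_summable.hasSum.mul_left _).mul_left _
  have hs : Summable (fun l => ∑' k, err R k l) :=
    Summable.of_norm_bounded hbd.summable (fun l => err_tsum_bound R hR l)
  have h1 := hs.hasSum.add (hasSum_ite_eq (0:ℤ) ((2 * π / 5 * R^5 : ℝ) : ℂ))
  have hc : Continuous (KK R N) := by
    unfold KK
    refine continuous_finsetSum _ (fun a _ => ?_)
    exact Complex.continuous_ofReal.comp (gg_cont.comp (by fun_prop))
  have hsupp : ∀ x, R ≤ |x| → KK R N x = 0 := by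
    intro x hx
    unfold KK
    simp [gg_supp2 R _ x hR (Or.inr hx)]
  have hP := poisson_cpt (KK R N) hc R hsupp (by
    simp_rw [KK_fourier R hR N hN]; exact h1.summable)
  simp_rw [KK_fourier R hR N hN] at hP
  rw [h1.tsum_eq, tsum_eq_sum (s := Finset.Icc (-(N:ℤ)) N)
    (fun b hb => hsupp b (not_mem_Icc hN b hb))] at hP
  have hb := tsum_of_norm_bounded hbd (fun l => err_tsum_bound R hR l)
  rw [← sub_eq_of_eq_add hP] at hb
  have e : (∑ b ∈ Finset.Icc (-(N:ℤ)) N, KK R N b) - ((2 * π / 5 * R^5 : ℝ) : ℂ) =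
    (((∑ b ∈ Finset.Icc (-(N:ℤ)) N, ∑ a ∈ Finset.Icc (-(N:ℤ)) N, gg (R^2 - (a:ℝ)^2 - (b:ℝ)^2))
      - 2 * π / 5 * R^5 : ℝ) : ℂ) := by
    unfold KK; push_cast; rfl
  rw [e, Complex.norm_real, Real.norm_eq_abs] at hb
  refine hb.trans (le_of_eq (by ring))

lemma r2_card (m N : ℕ) (h : m < N) :
    (((Finset.Icc (-(N:ℤ)) N ×ˢ Finset.Icc (-(N:ℤ)) N).filter
      (fun p : ℤ × ℤ => (p.1^2 + p.2^2).natAbs = m)).card) = r2 m := by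
  unfold r2
  rw [← Set.ncard_coe_finset]
  congr 1
  ext p
  have hp : 0 ≤ p.1^2 + p.2^2 := by positivity
  simp only [Finset.coe_filter, Finset.mem_product, Finset.mem_Icc, Set.mem_ofPred_eq]
  constructor
  · rintro ⟨_, h2⟩
    rw [← h2, Int.natAbs_of_nonneg hp]
  · intro h2
    have hm : (m:ℤ) < N := by exact_mod_cast h
    refine ⟨⟨⟨?_, ?_⟩, ⟨?_, ?_⟩⟩, ?_⟩
    · nlinarith [sq_nonneg p.2, sq_nonneg (p.1+1), sq_nonneg p.1]
    · nlinarith [sq_nonneg p.2, sq_nonneg (p.1-1), sq_nonneg p.1]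
    · nlinarith [sq_nonneg p.1, sq_nonneg (p.2+1), sq_nonneg p.2]
    · nlinarith [sq_nonneg p.1, sq_nonneg (p.2-1), sq_nonneg p.2]
    · rw [h2]; simp

lemma r2_sum (φ : ℕ → ℝ) (N : ℕ) (h : ∀ m, N ≤ m → φ m = 0) :
    ∑ m ∈ Finset.range N, (r2 m : ℝ) * φ m =
    ∑ b ∈ Finset.Icc (-(N:ℤ)) N, ∑ a ∈ Finset.Icc (-(N:ℤ)) N, φ ((a^2 + b^2).natAbs) := by
  rw [Finset.sum_comm, ← Finset.sum_product' (f := fun a b : ℤ => φ ((a^2 + b^2).natAbs))]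
  rw [← Finset.sum_filter_of_ne (p := fun p : ℤ × ℤ => (p.1^2 + p.2^2).natAbs ∈ Finset.range N)]
  · rw [← Finset.sum_fiberwise_of_maps_to (t := Finset.range N) (g := fun p : ℤ × ℤ => (p.1^2 + p.2^2).natAbs)]
    · apply Finset.sum_congr rfl
      intro m hm
      rw [Finset.mem_range] at hm
      rw [← r2_card m N hm, Finset.filter_filter, ← nsmul_eq_mul, ← Finset.sum_const]
      symm
      have : ∀ p : ℤ × ℤ, ((p.1^2 + p.2^2).natAbs ∈ Finset.range N ∧ (p.1^2 + p.2^2).natAbs = m) ↔ (p.1^2 + p.2^2).natAbs = m := by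
        intro p
        rw [Finset.mem_range]
        omega
      simp_rw [this]
      apply Finset.sum_congr rfl
      intro p hp
      rw [(Finset.mem_filter.1 hp).2]
    · intro p hp
      exact (Finset.mem_filter.1 hp).2
  · intro p _ hne
    by_contra hh
    rw [Finset.mem_range] at hh
    exact hne (h _ (by omega))

noncomputable def AA (K k : ℕ) (z : ℝ) : ℝ :=
  ∑ m ∈ Finset.range K, (r2 m : ℝ) * (max (z - m) 0) ^ ((k:ℝ) + 3/2)

lemma AA_zero (K : ℕ) (z : ℝ) (hz : 0 ≤ z) (hK : z < K) :
    |AA K 0 z - π * z ^ ((5:ℝ)/2) / (5/2)| ≤ UU^2 * z := by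
  rcases hz.eq_or_lt with rfl | hz
  · have : AA K 0 0 = 0 := by
      unfold AA
      apply Finset.sum_eq_zero
      intro m _
      rw [max_eq_right (by simp), Real.zero_rpow (by norm_num), mul_zero]
    rw [this, Real.zero_rpow (by norm_num)]
    simp
  · have hR : 0 < √z := Real.sqrt_pos.2 hz
    have h2 : √z ^ 2 = z := Real.sq_sqrt hz.le
    have hK1 : (1:ℝ) ≤ K := by
      have : 0 < K := by
        by_contra h
        have : K = 0 := by omega
        subst this; simp at hK; linarith
      exact_mod_cast this
    have hN : √z ≤ K := by
      rw [Real.sqrt_le_left (by linarith)]; nlinarith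
    have h := lattice_bound (√z) hR K hN
    have hs := r2_sum (fun m => gg (z - m)) K (fun m hm => gg_zero (by
      have : (K:ℝ) ≤ m := by exact_mod_cast hm
      linarith))
    have e1 : ∑ m ∈ Finset.range K, (r2 m : ℝ) * gg (z - m) = AA K 0 z := by
      unfold AA gg; simp
    have e2 : ∀ a b : ℤ, gg (z - (((a^2 + b^2).natAbs : ℕ) : ℝ)) = gg (√z^2 - (a:ℝ)^2 - (b:ℝ)^2) := by
      intro a b
      have : (((a^2 + b^2).natAbs : ℕ) : ℝ) = (a:ℝ)^2 + (b:ℝ)^2 := by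
        have h0 : 0 ≤ a^2 + b^2 := by positivity
        have := Int.natAbs_of_nonneg h0
        have : (((a^2 + b^2).natAbs : ℤ) : ℝ) = ((a^2 + b^2 : ℤ) : ℝ) := by rw [this]
        push_cast at this
        simpa using this
      rw [this, h2]; congr 1; ring
    rw [e1] at hs
    simp_rw [e2] at hs
    rw [← hs, h2] at h
    have e3 : √z ^ 5 = z ^ ((5:ℝ)/2) := by
      rw [Real.sqrt_eq_rpow, ← Real.rpow_natCast, ← Real.rpow_mul hz.le]; norm_num
    rw [e3] at h
    convert h using 3
    ring

lemma int_pos_part (m z p : ℝ) (hm : 0 ≤ m) (hz : 0 ≤ z) (hp : 0 < p) :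
    ∫ t in (0:ℝ)..z, (max (t - m) 0) ^ p = (max (z - m) 0) ^ (p + 1) / (p + 1) := by
  have hc : Continuous (fun t : ℝ => (max (t - m) 0) ^ p) :=
    ((continuous_id.sub continuous_const).max continuous_const).rpow_const (fun _ => Or.inr hp.le)
  have h0 : ∀ w : ℝ, 0 ≤ w → w ≤ m → ∫ t in (0:ℝ)..w, (max (t - m) 0) ^ p = 0 := by
    intro w hw hwm
    rw [intervalIntegral.integral_congr (g := fun _ => (0:ℝ))]
    · simp
    · intro t ht
      rw [uIcc_of_le hw] at ht
      simp only
      rw [max_eq_right (by linarith [ht.2]), Real.zero_rpow hp.ne']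
  rcases le_or_gt z m with h | h
  · rw [h0 z hz h, max_eq_right (by linarith), Real.zero_rpow (by linarith), zero_div]
  · rw [← intervalIntegral.integral_add_adjacent_intervals (hc.intervalIntegrable 0 m)
      (hc.intervalIntegrable m z), h0 m hm le_rfl, zero_add,
      intervalIntegral.integral_comp_sub_right (fun s => (max s 0) ^ p) m, sub_self,
      intervalIntegral.integral_congr (g := fun s => s ^ p), integral_rpow (Or.inl (by linarith)),
      max_eq_left (by linarith), Real.zero_rpow (by linarith), sub_zero]
    intro t ht
    rw [uIcc_of_le (by linarith)] at ht
    simp only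
    rw [max_eq_left ht.1]

lemma AA_cont (K k : ℕ) : Continuous (AA K k) := by
  unfold AA
  refine continuous_finsetSum _ (fun m _ => continuous_const.mul ?_)
  exact ((continuous_id.sub continuous_const).max continuous_const).rpow_const
    (fun _ => Or.inr (by positivity))

lemma AA_succ (K k : ℕ) (z : ℝ) (hz : 0 ≤ z) :
    AA K (k+1) z = ((k:ℝ) + 5/2) * ∫ t in (0:ℝ)..z, AA K k t := by
  unfold AA
  rw [intervalIntegral.integral_finsetSum, Finset.mul_sum]
  · apply Finset.sum_congr rfl
    intro m _
    rw [intervalIntegral.integral_const_mul, int_pos_part m z _ (by positivity) hz (by positivity)]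
    push_cast
    rw [show (k:ℝ) + 3/2 + 1 = k + 5/2 by ring, show (k:ℝ) + 1 + 3/2 = k + 5/2 by ring]
    have : (k:ℝ) + 5/2 ≠ 0 := by positivity
    field_simp
  · intro m _
    apply Continuous.intervalIntegrable
    exact continuous_const.mul (((continuous_id.sub continuous_const).max continuous_const).rpow_const
      (fun _ => Or.inr (by positivity)))

lemma AA_bound (K k : ℕ) : ∀ z : ℝ, 0 ≤ z → z < K →
    |AA K k z - π * z ^ ((k:ℝ) + 5/2) / ((k:ℝ) + 5/2)| ≤ UU^2 * (3/2)^k * z^(k+1) := by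
  induction k with
  | zero =>
    intro z hz hK
    have := AA_zero K z hz hK
    simpa using this
  | succ k ih =>
    intro z hz hK
    have hk : (0:ℝ) < (k:ℝ) + 5/2 := by positivity
    have hc2 : Continuous (fun t : ℝ => π * t ^ ((k:ℝ) + 5/2) / ((k:ℝ) + 5/2)) :=
      (continuous_const.mul (continuous_id.rpow_const (fun _ => Or.inr hk.le))).div_const _
    have e : AA K (k+1) z - π * z ^ (((k+1 : ℕ):ℝ) + 5/2) / (((k+1 : ℕ):ℝ) + 5/2) =
        ((k:ℝ) + 5/2) * ∫ t in (0:ℝ)..z, (AA K k t - π * t ^ ((k:ℝ) + 5/2) / ((k:ℝ) + 5/2)) := by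
      rw [intervalIntegral.integral_sub ((AA_cont K k).intervalIntegrable _ _)
        (hc2.intervalIntegrable _ _), AA_succ K k z hz, mul_sub]
      congr 1
      rw [intervalIntegral.integral_div, intervalIntegral.integral_const_mul,
        integral_rpow (Or.inl (by linarith)), Real.zero_rpow (by positivity), sub_zero]
      push_cast
      rw [show (k:ℝ) + 1 + 5/2 = k + 5/2 + 1 by ring]
      field_simp
    rw [e, abs_mul, abs_of_pos hk]
    have hb : |∫ t in (0:ℝ)..z, (AA K k t - π * t ^ ((k:ℝ) + 5/2) / ((k:ℝ) + 5/2))| ≤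
        ∫ t in (0:ℝ)..z, UU^2 * (3/2)^k * t^(k+1) := by
      rw [← Real.norm_eq_abs]
      apply intervalIntegral.norm_integral_le_of_norm_le hz
      · refine Eventually.of_forall (fun t ht => ?_)
        exact ih t ht.1.le (lt_of_le_of_lt ht.2 hK)
      · exact Continuous.intervalIntegrable (by fun_prop) _ _
    rw [intervalIntegral.integral_const_mul, integral_pow] at hb
    refine (mul_le_mul_of_nonneg_left hb hk.le).trans ?_
    have : ((k:ℝ) + 5/2) * (UU^2 * (3/2)^k * ((z^(k+1+1) - 0^(k+1+1)) / (((k+1 : ℕ):ℝ) + 1)))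
      = (UU^2 * (3/2)^k * z^(k+1+1)) * (((k:ℝ) + 5/2) / ((k:ℝ) + 2)) := by
      push_cast
      rw [zero_pow (by omega), show (k:ℝ)+1+1 = k+2 by ring]
      field_simp
      ring
    rw [this, show UU^2 * (3/2)^(k+1) * z^(k+1+1) = (UU^2 * (3/2)^k * z^(k+1+1)) * (3/2) by ring]
    apply mul_le_mul_of_nonneg_left _ (by positivity)
    rw [div_le_iff₀ (by positivity)]
    have : (0:ℝ) ≤ k := by positivity
    linarith

noncomputable def dd (k : ℕ) : ℝ := Ring.choose (1/2 : ℝ) (k+1) * (-1/2)^(k+1)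

lemma binom_hasSum (t : ℝ) (ht : |t| < 1) :
    HasSum (fun n : ℕ => Ring.choose (1/2 : ℝ) n * t^n) ((1 + t) ^ ((1:ℝ)/2)) := by
  have h := (Real.one_add_rpow_hasFPowerSeriesOnBall_zero (a := 1/2)).hasSum (y := t) (by
    simpa [← ofReal_norm] using ht)
  have e : (fun n : ℕ => Ring.choose (1/2 : ℝ) n * t^n) =
      fun n : ℕ => (binomialSeries ℝ (1/2 : ℝ)) n (fun _ => t) := by
    funext n
    rw [binomialSeries_apply, List.ofFn_const, List.prod_replicate, smul_eq_mul]
  rw [e]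
  rw [zero_add] at h
  exact h

lemma dd_summable : Summable (fun k : ℕ => |dd k| * (3/2)^k) := by
  have h := (binom_hasSum (3/4) (by norm_num [abs_lt])).summable.abs
  have h2 := ((summable_nat_add_iff 1).2 h).mul_left (2/3)
  refine h2.congr (fun k => ?_)
  unfold dd
  rw [abs_mul, abs_mul, abs_pow, abs_pow, show |(-1/2:ℝ)| = 1/2 by norm_num [abs_of_neg],
    show |(3/4:ℝ)| = (1/2) * (3/2) by norm_num [abs_of_pos], mul_pow]
  ring

lemma dd_summable' : Summable (fun k : ℕ => |dd k|) := by
  refine Summable.of_nonneg_of_le (fun k => abs_nonneg _) (fun k => ?_) dd_summable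
  exact le_mul_of_one_le_right (abs_nonneg _) (one_le_pow₀ (by norm_num))

lemma dd_hasSum (s : ℝ) (h0 : 0 ≤ s) (h1 : s ≤ 1) :
    HasSum (fun k : ℕ => dd k * s ^ ((k:ℝ) + 3/2)) (√s * (√(1 - s/2) - 1)) := by
  have h := binom_hasSum (-(s/2)) (by rw [abs_neg, abs_of_nonneg (by linarith)]; linarith)
  have h2 := (hasSum_nat_add_iff' 1).2 h
  have h3 := h2.mul_left (√s)
  simp only [Finset.sum_range_one, Ring.choose_zero_right, pow_zero, mul_one] at h3
  rw [← Real.sqrt_eq_rpow, ← sub_eq_add_neg] at h3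
  have e : (fun k : ℕ => dd k * s ^ ((k:ℝ) + 3/2)) =
      fun k : ℕ => √s * (Ring.choose (1/2 : ℝ) (k+1) * (-(s/2))^(k+1)) := by
    funext k
    unfold dd
    have : s ^ ((k:ℝ) + 3/2) = √s * s^(k+1) := by
      rw [show (k:ℝ) + 3/2 = 1/2 + ((k+1 : ℕ):ℝ) by push_cast; ring,
        Real.rpow_add_of_nonneg h0 (by norm_num) (by positivity), Real.rpow_natCast, Real.sqrt_eq_rpow]
    rw [this, show -(s/2) = (-1/2) * s by ring, mul_pow]
    ring
  rw [e]
  exact h3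

lemma int_main : ∫ s in (0:ℝ)..1, √s * (√(1 - s/2) - 1) = (π/4) / √2 - 2/3 := by
  have e : ∀ s ∈ uIcc (0:ℝ) 1, √s * (√(1 - s/2) - 1) = (√(1 - (1 - s)^2)) / √2 - √s := by
    intro s hs
    rw [uIcc_of_le zero_le_one] at hs
    rw [mul_sub, mul_one, ← Real.sqrt_mul hs.1, ← Real.sqrt_div' _ (by norm_num)]
    congr 2; ring
  rw [intervalIntegral.integral_congr e, intervalIntegral.integral_sub
    (Continuous.intervalIntegrable (by fun_prop) _ _) (Continuous.intervalIntegrable (by fun_prop) _ _),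
    intervalIntegral.integral_div]
  congr 1
  · congr 1
    rw [intervalIntegral.integral_comp_sub_left (fun u => √(1 - u^2)) 1]
    norm_num
    have h := integral_sqrt_one_sub_sq
    have hc : Continuous (fun u : ℝ => √(1 - u^2)) := by fun_prop
    rw [← intervalIntegral.integral_add_adjacent_intervals (hc.intervalIntegrable (-1) 0)
      (hc.intervalIntegrable 0 1)] at h
    have h2 := intervalIntegral.integral_comp_neg (a := 0) (b := 1) (fun u : ℝ => √(1 - u^2))
    simp at h2
    rw [← h2] at h
    linarith
  · simp_rw [Real.sqrt_eq_rpow]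
    rw [integral_rpow (Or.inl (by norm_num))]
    norm_num

lemma dd_main : HasSum (fun k : ℕ => dd k / ((k:ℝ) + 5/2)) ((π/4) / √2 - 2/3) := by
  rw [← int_main]
  have hi : ∀ k : ℕ, ∫ s in (0:ℝ)..1, dd k * s ^ ((k:ℝ) + 3/2) = dd k / ((k:ℝ) + 5/2) := by
    intro k
    have : (0:ℝ) ≤ k := by positivity
    rw [intervalIntegral.integral_const_mul, integral_rpow (Or.inl (by linarith)),
      Real.zero_rpow (by positivity), Real.one_rpow, show (k:ℝ) + 3/2 + 1 = k + 5/2 by ring]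
    ring
  simp_rw [← hi]
  apply intervalIntegral.hasSum_integral_of_dominated_convergence (fun k _ => |dd k|)
  · intro k
    apply Continuous.aestronglyMeasurable
    exact continuous_const.mul (continuous_id.rpow_const (fun _ => Or.inr (by positivity)))
  · intro k
    refine Eventually.of_forall (fun s hs => ?_)
    rw [uIoc_of_le zero_le_one] at hs
    rw [norm_mul, Real.norm_eq_abs, Real.norm_of_nonneg (Real.rpow_nonneg hs.1.le _)]
    exact mul_le_of_le_one_right (abs_nonneg _) (Real.rpow_le_one hs.1.le hs.2 (by positivity))
  · exact Eventually.of_forall (fun s _ => dd_summable')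
  · exact intervalIntegrable_const
  · refine Eventually.of_forall (fun s hs => ?_)
    rw [uIoc_of_le zero_le_one] at hs
    exact dd_hasSum s hs.1.le hs.2

lemma diff_hasSum (y : ℝ) (hy : 0 < y) (K : ℕ) (hK : ∀ m ∈ Finset.range K, (m:ℝ) ≤ y) :
    HasSum (fun k : ℕ => dd k * (y ^ (-((k:ℝ) + 3/2)) * AA K k y))
      (∑ m ∈ Finset.range K, (r2 m : ℝ) * (√(1 - m/y) * (√(1 - (1 - m/y)/2) - 1))) := by
  have h := hasSum_sum (s := Finset.range K)
    (f := fun m k => (r2 m : ℝ) * (dd k * (1 - m/y) ^ ((k:ℝ) + 3/2)))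
    (a := fun m => (r2 m : ℝ) * (√(1 - m/y) * (√(1 - (1 - m/y)/2) - 1))) (by
      intro m hm
      apply HasSum.mul_left
      apply dd_hasSum
      · rw [sub_nonneg, div_le_one hy]; exact hK m hm
      · have : (0:ℝ) ≤ m / y := by positivity
        linarith)
  convert h using 2 with k
  unfold AA
  rw [Finset.mul_sum, Finset.mul_sum]
  apply Finset.sum_congr rfl
  intro m hm
  have hmy := hK m hm
  rw [max_eq_left (by linarith), show (1 - m/y : ℝ) = y⁻¹ * (y - m) by field_simp,
    Real.mul_rpow (by positivity) (by linarith), Real.inv_rpow hy.le, Real.rpow_neg hy.le]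
  ring

lemma main_bound (y : ℝ) (hy : 0 < y) (K : ℕ) (hK : ∀ m ∈ Finset.range K, (m:ℝ) ≤ y) (hK2 : y < K) :
    |(∑ m ∈ Finset.range K, (r2 m : ℝ) * (√(1 - m/y) * (√(1 - (1 - m/y)/2) - 1)))
      - π * y * ((π/4) / √2 - 2/3)| ≤ y ^ (-(1:ℝ)/2) * (UU^2 * ∑' k, |dd k| * (3/2)^k) := by
  have h := (diff_hasSum y hy K hK).sub (dd_main.mul_left (π * y))
  have hb : HasSum (fun k => y ^ (-(1:ℝ)/2) * (UU^2 * (|dd k| * (3/2)^k)))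
     (y ^ (-(1:ℝ)/2) * (UU^2 * ∑' k, |dd k| * (3/2)^k)) :=
    (dd_summable.hasSum.mul_left _).mul_left _
  rw [← Real.norm_eq_abs, ← h.tsum_eq]
  apply tsum_of_norm_bounded hb
  intro k
  have e : dd k * (y ^ (-((k:ℝ) + 3/2)) * AA K k y) - π * y * (dd k / ((k:ℝ) + 5/2)) =
     dd k * (y ^ (-((k:ℝ) + 3/2)) * (AA K k y - π * y ^ ((k:ℝ) + 5/2) / ((k:ℝ) + 5/2))) := by
    have : y ^ (-((k:ℝ) + 3/2)) * y ^ ((k:ℝ) + 5/2) = y := by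
      rw [← Real.rpow_add hy]
      ring_nf
      norm_num
    calc _ = dd k * (y ^ (-((k:ℝ) + 3/2)) * AA K k y) - π * (y ^ (-((k:ℝ) + 3/2)) * y ^ ((k:ℝ) + 5/2)) * (dd k / ((k:ℝ) + 5/2)) := by rw [this]
      _ = _ := by ring
  rw [e, norm_mul, norm_mul, Real.norm_of_nonneg (Real.rpow_nonneg hy.le _), Real.norm_eq_abs, Real.norm_eq_abs]
  calc _ ≤ |dd k| * (y ^ (-((k:ℝ) + 3/2)) * (UU^2 * (3/2)^k * y^(k+1))) := by
        gcongr
        exact AA_bound K k y hy.le hK2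
    _ = |dd k| * (UU^2 * (3/2)^k * (y ^ (-((k:ℝ) + 3/2)) * y^(k+1))) := by ring
    _ = |dd k| * (UU^2 * (3/2)^k * y ^ (-(1:ℝ)/2)) := by
        congr 2
        rw [← Real.rpow_natCast, ← Real.rpow_add hy]
        congr 1
        push_cast
        ring
    _ = _ := by ring

lemma M_sub_S (x : ℝ) (hx : 1 ≤ x) : M x - Sx0 x = √2 * √x *
    ∑ m ∈ Finset.range (⌊√x⌋₊ + 1), (r2 m : ℝ) * (√(1 - m/√x) * (√(1 - (1 - m/√x)/2) - 1)) := by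
  have hx0 : 0 ≤ x := by linarith
  have hy : 0 < √x := Real.sqrt_pos.2 (by linarith)
  have hyx : √x ^ 2 = x := Real.sq_sqrt hx0
  unfold M Sx0
  rw [Finset.mul_sum, Finset.mul_sum, ← Finset.sum_sub_distrib]
  apply Finset.sum_congr rfl
  intro m hm
  have hmy : (m:ℝ) ≤ √x := by
    rw [Finset.mem_range, Nat.lt_succ_iff] at hm
    exact (Nat.cast_le.2 hm).trans (Nat.floor_le hy.le)
  have hm0 : (0:ℝ) ≤ m := by positivity
  have e4 : x ^ ((1:ℝ)/4) = √(√x) := by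
    rw [Real.sqrt_eq_rpow, Real.sqrt_eq_rpow, ← Real.rpow_mul hx0]; norm_num
  rw [e4, ← Real.sqrt_eq_rpow, ← Real.sqrt_eq_rpow]
  set y := √x with hydef
  have hs0 : 0 ≤ 1 - m / y := by rw [sub_nonneg, div_le_one hy]; exact hmy
  have a1 : √(x - (m:ℝ)^2) = √2 * y * (√(1 - m/y) * √(1 - (1 - m/y)/2)) := by
    have : x - (m:ℝ)^2 = (2 * y^2) * ((1 - m/y) * (1 - (1 - m/y)/2)) := by
      rw [← hyx]; field_simp; ring
    rw [← Real.sqrt_mul hs0, this, Real.sqrt_mul (by positivity), Real.sqrt_mul (by norm_num),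
      Real.sqrt_sq hy.le]
  have a2 : √y * √(y - m) = y * √(1 - m/y) := by
    have : y * (y - m) = y^2 * (1 - m/y) := by field_simp
    rw [← Real.sqrt_mul hy.le, this, Real.sqrt_mul (by positivity), Real.sqrt_sq hy.le]
  rw [a1]
  linear_combination (-(√2) * (r2 m : ℝ)) * a2

/-- There are `C > 0` and `x₀ ≥ 1` such that for all `x ≥ x₀`,
`|M(x) − (π²/4)·x − x^{1/2}·Q(√x)| ≤ C·x^{1/4}`. -/
theorem M_asymptotic :
    ∃ C : ℝ, 0 < C ∧ ∃ x₀ : ℝ, 1 ≤ x₀ ∧ ∀ x : ℝ, x₀ ≤ x →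
      |M x - Real.pi ^ 2 / 4 * x - x ^ ((1 : ℝ) / 2) * Q x| ≤ C * x ^ ((1 : ℝ) / 4) := by
  set D := UU^2 * ∑' k, |dd k| * (3/2)^k with hD
  have hD0 : 0 ≤ D := by
    apply mul_nonneg (sq_nonneg _)
    exact tsum_nonneg (fun k => by positivity)
  refine ⟨√2 * D + 1, by positivity, 1, le_rfl, fun x hx => ?_⟩
  have hx0 : 0 < x := by linarith
  have hy : 0 < √x := Real.sqrt_pos.2 hx0
  have hyx : √x ^ 2 = x := Real.sq_sqrt hx0.le
  have hq : x ^ ((1:ℝ)/2) * Q x = Sx0 x - 2 ^ ((3 : ℝ) / 2) * Real.pi / 3 * x := by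
    unfold Q
    rw [← mul_assoc, ← Real.rpow_add hx0]
    norm_num
  have h2 : (2:ℝ) ^ ((3:ℝ)/2) = 2 * √2 := by
    rw [show (3:ℝ)/2 = 1 + 1/2 by norm_num, Real.rpow_add (by norm_num), Real.sqrt_eq_rpow]; norm_num
  have hb := main_bound (√x) hy (⌊√x⌋₊ + 1) (by
    intro m hm
    rw [Finset.mem_range, Nat.lt_succ_iff] at hm
    exact (Nat.cast_le.2 hm).trans (Nat.floor_le hy.le)) (by
    push_cast; exact Nat.lt_floor_add_one _)
  rw [← hD] at hb
  have hs2 : √2 * √2 = 2 := Real.mul_self_sqrt (by norm_num)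
  have e : M x - Real.pi ^ 2 / 4 * x - x ^ ((1 : ℝ) / 2) * Q x = √2 * √x *
     ((∑ m ∈ Finset.range (⌊√x⌋₊ + 1), (r2 m : ℝ) * (√(1 - m/√x) * (√(1 - (1 - m/√x)/2) - 1)))
      - π * √x * ((π/4) / √2 - 2/3)) := by
    rw [hq, h2, mul_sub, ← M_sub_S x hx]
    have : √2 * √x * (π * √x * ((π/4) / √2 - 2/3)) = √x^2 * π * (π/4 - √2 * (2/3)) := by
      field_simp
    rw [this, hyx]
    ring
  rw [e, abs_mul, abs_of_nonneg (by positivity)]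
  have e4 : √x * √x ^ (-(1:ℝ)/2) = x ^ ((1:ℝ)/4) := by
    rw [Real.sqrt_eq_rpow, ← Real.rpow_mul hx0.le, ← Real.rpow_add hx0]
    norm_num
  calc _ ≤ √2 * √x * (√x ^ (-(1:ℝ)/2) * D) := by gcongr
    _ = √2 * D * x ^ ((1:ℝ)/4) := by rw [← e4]; ring
    _ ≤ _ := by
      have : 0 ≤ x ^ ((1:ℝ)/4) := by positivity
      nlinarith
end

section
/- There exist a constant C > 0 and x₀ ≥ 1 such that for all real x ≥ x₀, |E(x) − 2·x^{1/2}·Q(√x)| ≤ C·x^{1/2}, where E(x) = S(x) − (π²/2)x and Q(√x) = x^{−1/2}·(S(√x; 0) − (2^{3/2}π/3)·x). -/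
open Real

/-- `S(x)`: the number of integer points `(a,b,w)` with `(a²+b²)² + w² < x`. -/
noncomputable def S (x : ℝ) : ℕ :=
  Set.ncard {p : ℤ × ℤ × ℤ |
    (((p.1 : ℝ) ^ 2 + (p.2.1 : ℝ) ^ 2) ^ 2 + (p.2.2 : ℝ) ^ 2) < x}

/-- `E(x) = S(x) - (π²/2)·x`. -/
noncomputable def E (x : ℝ) : ℝ := (S x : ℝ) - (Real.pi ^ 2 / 2) * x

open MeasureTheory

structure Kern (k k1 k2 : ℝ → ℝ) : Prop where
  c0 : ContinuousOn k (Set.Icc 0 1)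
  c1 : ContinuousOn k1 (Set.Icc 0 1)
  d0 : ∀ u ∈ Set.Ioo (0:ℝ) 1, HasDerivAt k (k1 u) u
  d1 : ∀ u ∈ Set.Ioo (0:ℝ) 1, HasDerivAt k1 (k2 u) u
  nn : ∀ u ∈ Set.Ioo (0:ℝ) 1, 0 ≤ k2 u
  e1 : k1 1 = 0
  ez : ∀ u, 1 ≤ u → k u = 0

lemma Kern.int {k k1 k2 : ℝ → ℝ} (h : Kern k k1 k2) : IntervalIntegrable k2 volume 0 1 := by
  apply intervalIntegral.intervalIntegrable_deriv_of_nonneg (g := k1)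
  · simpa using h.c1
  · simpa using h.d1
  · simpa using h.nn

lemma Kern.int_eq {k k1 k2 : ℝ → ℝ} (h : Kern k k1 k2) : ∫ s in (0:ℝ)..1, k2 s = - k1 0 := by
  rw [intervalIntegral.integral_eq_sub_of_hasDerivAt_of_le zero_le_one h.c1 h.d1 h.int, h.e1]
  ring

lemma Kern.mulint {k k1 k2 : ℝ → ℝ} (h : Kern k k1 k2) {M : ℝ → ℝ} (hM : Continuous M) :
    IntervalIntegrable (fun s => k2 s * M s) volume 0 1 :=
  h.int.mul_continuousOn hM.continuousOn

lemma Kern.rep {k k1 k2 : ℝ → ℝ} (h : Kern k k1 k2) (a : ℝ) (ha : 0 ≤ a) :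
    ∫ s in (0:ℝ)..1, k2 s * max (s - a) 0 = k a := by
  rcases le_or_gt 1 a with h1 | h1
  · rw [h.ez a h1]
    rw [intervalIntegral.integral_congr (g := fun _ => 0)]
    · simp
    · intro s hs
      rw [Set.uIcc_of_le zero_le_one] at hs
      have : max (s - a) 0 = 0 := max_eq_right (by linarith [hs.2])
      simp [this]
  have hI := h.mulint (M := fun s => max (s - a) 0) (by fun_prop)
  have hI1 : IntervalIntegrable (fun s => k2 s * max (s - a) 0) volume 0 a :=
    hI.mono_set (by rw [Set.uIcc_of_le ha, Set.uIcc_of_le zero_le_one]; exact Set.Icc_subset_Icc le_rfl h1.le)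
  have hI2 : IntervalIntegrable (fun s => k2 s * max (s - a) 0) volume a 1 :=
    hI.mono_set (by rw [Set.uIcc_of_le h1.le, Set.uIcc_of_le zero_le_one]; exact Set.Icc_subset_Icc ha le_rfl)
  rw [← intervalIntegral.integral_add_adjacent_intervals hI1 hI2]
  have z : ∫ s in (0:ℝ)..a, k2 s * max (s - a) 0 = 0 := by
    rw [intervalIntegral.integral_congr (g := fun _ => 0)]
    · simp
    · intro s hs
      rw [Set.uIcc_of_le ha] at hs
      have : max (s - a) 0 = 0 := max_eq_right (by linarith [hs.2])
      simp [this]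
  have hsub : Set.Icc a 1 ⊆ Set.Icc 0 1 := Set.Icc_subset_Icc ha le_rfl
  rw [z, intervalIntegral.integral_eq_sub_of_hasDerivAt_of_le (f := fun s => (s - a) * k1 s - k s) h1.le
    _ _ hI2]
  · simp [h.e1, h.ez 1 le_rfl]
  · have := h.c1.mono hsub
    have := h.c0.mono hsub
    fun_prop
  · intro s hs
    have hs' : s ∈ Set.Ioo (0:ℝ) 1 := ⟨ha.trans_lt hs.1, hs.2⟩
    have := (((hasDerivAt_id s).sub_const a).mul (h.d1 s hs')).sub (h.d0 s hs')
    refine this.congr_deriv ?_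
    rw [max_eq_left (by linarith [hs.1])]
    simp; ring

lemma Kern.transfer {k k1 k2 : ℝ → ℝ} (h : Kern k k1 k2) {ι : Type*} (I : Finset ι) (m : ι → ℝ)
    (hm : ∀ i ∈ I, 0 ≤ m i) (R : ℝ) (hR : 0 < R) (M : ℝ → ℝ) (hM : Continuous M) (D : ℝ)
    (hD : ∀ T, 0 ≤ T → T ≤ R → |∑ i ∈ I, max (T - m i) 0 - M T| ≤ D) :
    |∑ i ∈ I, k (m i / R) - (1 / R) * ∫ s in (0:ℝ)..1, k2 s * M (s * R)| ≤ D / R * (- k1 0) := by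
  have e1 : ∑ i ∈ I, k (m i / R) =
      (1 / R) * ∫ s in (0:ℝ)..1, k2 s * ∑ i ∈ I, max (s * R - m i) 0 := by
    rw [← intervalIntegral.integral_const_mul]
    rw [Finset.sum_congr rfl (fun i hi => (h.rep (m i / R) (div_nonneg (hm i hi) hR.le)).symm)]
    rw [← intervalIntegral.integral_finsetSum]
    · congr 1; ext s
      rw [Finset.mul_sum, Finset.mul_sum]
      refine Finset.sum_congr rfl fun i _ => ?_
      have : s * R - m i = R * (s - m i / R) := by field_simp
      rw [this]
      have : max (R * (s - m i / R)) 0 = R * max (s - m i / R) 0 := by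
        rw [mul_max_of_nonneg _ _ hR.le, mul_zero]
      rw [this]; field_simp
    · intro i _
      exact h.mulint (by fun_prop)
  have i1 := h.mulint (M := fun s => ∑ i ∈ I, max (s * R - m i) 0) (by fun_prop)
  have i2 := h.mulint (M := fun s => M (s * R)) (by fun_prop)
  rw [e1, ← mul_sub, ← intervalIntegral.integral_sub i1 i2, abs_mul, abs_of_pos (by positivity : 0 < 1 / R)]
  have : |∫ s in (0:ℝ)..1, (k2 s * ∑ i ∈ I, max (s * R - m i) 0 - k2 s * M (s * R))| ≤
      ∫ s in (0:ℝ)..1, D * k2 s := by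
    rw [← Real.norm_eq_abs]
    apply intervalIntegral.norm_integral_le_of_norm_le zero_le_one _ (h.int.const_mul D)
    have : ∀ᵐ s : ℝ, s ≠ 1 := by simp [ae_iff]
    filter_upwards [this] with s hs1 hs
    have hs' : s ∈ Set.Ioo (0:ℝ) 1 := ⟨hs.1, lt_of_le_of_ne hs.2 hs1⟩
    rw [← mul_sub, Real.norm_eq_abs, abs_mul, abs_of_nonneg (h.nn s hs'), mul_comm]
    exact mul_le_mul_of_nonneg_right (hD _ (mul_nonneg hs.1.le hR.le) (by nlinarith [hs.2])) (h.nn s hs')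
  rw [intervalIntegral.integral_const_mul, h.int_eq] at this
  calc _ ≤ 1 / R * (D * - k1 0) := by gcongr
    _ = _ := by ring

/-- inner one-dimensional sum -/
lemma one_dim_sum (N : ℕ) (t : ℝ) (hN : t ≤ (N:ℝ) ^ 2) :
    |∑ b ∈ Finset.Icc (-(N:ℤ)) N, max (t - (b:ℝ) ^ 2) 0 - 4 / 3 * √t ^ 3| ≤ √t + 1 := by
  rcases lt_or_ge t 0 with h0 | h0
  · rw [Real.sqrt_eq_zero_of_nonpos h0.le, Finset.sum_eq_zero]
    · norm_num
    · intro b _; apply max_eq_right; nlinarith [sq_nonneg (b:ℝ)]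
  obtain ⟨s, hs0, rfl⟩ : ∃ s : ℝ, 0 ≤ s ∧ t = s ^ 2 := ⟨√t, Real.sqrt_nonneg _, (Real.sq_sqrt h0).symm⟩
  rw [Real.sqrt_sq hs0]
  have hsN : s ≤ N := by
    exact le_of_sq_le_sq hN (by positivity)
  set k := ⌊s⌋₊ with hk
  have k1 : (k:ℝ) ≤ s := Nat.floor_le hs0
  have k2 : s < k + 1 := Nat.lt_floor_add_one s
  have hkN : k ≤ N := by exact_mod_cast k1.trans hsN
  have e : ∑ b ∈ Finset.Icc (-(N:ℤ)) N, max (s ^ 2 - (b:ℝ) ^ 2) 0 =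
      ∑ b ∈ Finset.Icc (-(k:ℤ)) k, (s ^ 2 - (b:ℝ) ^ 2) := by
    symm
    rw [← Finset.sum_subset (s₁ := Finset.Icc (-(k:ℤ)) k) (s₂ := Finset.Icc (-(N:ℤ)) N)]
    · refine Finset.sum_congr rfl fun b hb => ?_
      rw [Finset.mem_Icc] at hb
      rw [max_eq_left]
      have h1 : -(k:ℝ) ≤ b := by exact_mod_cast hb.1
      have h2 : (b:ℝ) ≤ k := by exact_mod_cast hb.2
      nlinarith
    · exact Finset.Icc_subset_Icc (by omega) (by omega)
    · intro b _ hb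
      rw [Finset.mem_Icc, not_and_or] at hb
      apply max_eq_right
      rcases hb with hb | hb
      · have h1 : (b:ℝ) ≤ -(k:ℝ) - 1 := by
          have : b ≤ -(k:ℤ) - 1 := by omega
          exact_mod_cast this
        nlinarith
      · have h1 : (k:ℝ) + 1 ≤ b := by
          have : (k:ℤ) + 1 ≤ b := by omega
          exact_mod_cast this
        nlinarith
  have e2 : ∀ k : ℕ, ∑ b ∈ Finset.Icc (-(k:ℤ)) k, (s ^ 2 - (b:ℝ) ^ 2) =
      (2 * k + 1) * s ^ 2 - k * (k + 1) * (2 * k + 1) / 3 := by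
    intro k
    induction k with
    | zero => simp
    | succ k ih =>
      have : Finset.Icc (-((k + 1 : ℕ):ℤ)) ((k + 1 : ℕ):ℤ) =
          insert (-((k:ℤ) + 1)) (insert ((k:ℤ) + 1) (Finset.Icc (-(k:ℤ)) k)) := by
        ext b; simp only [Finset.mem_Icc, Finset.mem_insert]; omega
      rw [this, Finset.sum_insert, Finset.sum_insert, ih]
      · push_cast; ring
      · simp
      · simp only [Finset.mem_Icc, Finset.mem_insert]; omega
  rw [e, e2]
  obtain ⟨d, hd⟩ : ∃ d : ℝ, d = k + 1 / 2 - s := ⟨_, rfl⟩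
  have hkd : (k:ℝ) = s + d - 1 / 2 := by linarith
  rw [hkd] at k1 k2 ⊢
  have d1 : d ≤ 1 / 2 := by linarith
  have d2 : -(1 / 2) ≤ d := by linarith
  have key : (2 * (s + d - 1 / 2) + 1) * s ^ 2 - (s + d - 1 / 2) * (s + d - 1 / 2 + 1) * (2 * (s + d - 1 / 2) + 1) / 3
      - 4 / 3 * s ^ 3 = s * (1 / 6 - 2 * d ^ 2) + 2 / 3 * (d * (1 / 4 - d ^ 2)) := by ring
  rw [key]
  have q0 : 0 ≤ d ^ 2 := sq_nonneg d
  have q1 : d ^ 2 ≤ 1 / 4 := by nlinarith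
  rw [abs_le]
  constructor
  · nlinarith [mul_nonneg hs0 q0, mul_nonneg hs0 (sub_nonneg.2 q1), mul_nonneg (sub_nonneg.2 d1) (sub_nonneg.2 q1), mul_nonneg (by linarith : 0 ≤ d + 1/2) (sub_nonneg.2 q1)]
  · nlinarith [mul_nonneg hs0 q0, mul_nonneg hs0 (sub_nonneg.2 q1), mul_nonneg (sub_nonneg.2 d1) (sub_nonneg.2 q1), mul_nonneg (by linarith : 0 ≤ d + 1/2) (sub_nonneg.2 q1)]

lemma hasDerivAt_sqrt_one_sub (u : ℝ) (hu : u < 1) :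
    HasDerivAt (fun u : ℝ => √(1 - u)) (-(1 / (2 * √(1 - u)))) u := by
  have := ((hasDerivAt_id u).const_sub 1).sqrt (by simp; linarith)
  refine this.congr_deriv ?_
  simp; ring

lemma hasDerivAt_sqrt_one_add (u : ℝ) (hu : 0 < u) :
    HasDerivAt (fun u : ℝ => √(1 + u)) (1 / (2 * √(1 + u))) u := by
  have := ((hasDerivAt_id u).const_add 1).sqrt (by simp; linarith)
  refine this.congr_deriv ?_
  simp

lemma kern32 : Kern (fun u => √(1 - u) ^ 3) (fun u => -(3 / 2 * √(1 - u)))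
    (fun u => 3 / 4 / √(1 - u)) where
  c0 := by fun_prop
  c1 := by fun_prop
  d0 := by
    intro u hu
    have hp : 0 < √(1 - u) := Real.sqrt_pos.2 (by linarith [hu.2])
    refine ((hasDerivAt_sqrt_one_sub u hu.2).pow 3).congr_deriv ?_
    field_simp
    norm_num
    ring
  d1 := by
    intro u hu
    have hp : 0 < √(1 - u) := Real.sqrt_pos.2 (by linarith [hu.2])
    refine ((hasDerivAt_sqrt_one_sub u hu.2).const_mul (3 / 2)).neg.congr_deriv ?_
    field_simp
    norm_num
  nn := by intro u _; positivity
  e1 := by simp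
  ez := by intro u hu; simp [Real.sqrt_eq_zero_of_nonpos (by linarith : 1 - u ≤ 0)]

lemma beta_int : ∫ s in (0:ℝ)..1, (3 / 4 / √(1 - s)) * (4 / 3 * √s ^ 3) = 3 * π / 8 := by
  rw [intervalIntegral.integral_eq_sub_of_hasDerivAt_of_le
    (f := fun s => 3 / 4 * Real.arcsin (√s) - √s * √(1 - s) * (3 / 4 + s / 2)) zero_le_one
    _ _ (kern32.mulint (by fun_prop))]
  · simp; ring
  · have := Real.continuous_arcsin
    fun_prop
  · intro s hs
    have hp : 0 < √(1 - s) := Real.sqrt_pos.2 (by linarith [hs.2])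
    have hq : 0 < √s := Real.sqrt_pos.2 hs.1
    have hp2 : √(1 - s) ^ 2 = 1 - s := Real.sq_sqrt (by linarith [hs.2])
    have hq2 : √s ^ 2 = s := Real.sq_sqrt hs.1.le
    have hq1 : √s < 1 := by rw [Real.sqrt_lt' one_pos]; linarith [hs.2]
    have D1 := (Real.hasDerivAt_arcsin (x := √s) (by linarith) (by linarith)).comp s
      (Real.hasDerivAt_sqrt hs.1.ne')
    have D2 := (Real.hasDerivAt_sqrt hs.1.ne').mul (hasDerivAt_sqrt_one_sub s hs.2)
    have D3 := ((hasDerivAt_id s).div_const 2).const_add (3 / 4)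
    refine ((D1.const_mul (3 / 4)).sub (D2.mul D3)).congr_deriv ?_
    simp only [id, Pi.mul_apply, hq2]
    generalize √(1 - s) = p at *
    generalize √s = q at *
    subst hq2
    field_simp
    have : p ^ 2 = 1 - q ^ 2 := hp2
    have h4 : p ^ 4 = (1 - q ^ 2) ^ 2 := by rw [← this]; ring
    ring_nf
    rw [this]
    ring

noncomputable def gk (u : ℝ) : ℝ := √2 * √(1 - u) - √(1 - u ^ 2)
noncomputable def gk1 (u : ℝ) : ℝ :=
  -(√(1 - u) * (1 + 2 * u) / (√2 * √(1 + u) * (√(1 + u) + √2 * u)))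
noncomputable def gk2 (u : ℝ) : ℝ :=
  1 / (√(1 - u) * √(1 + u)) ^ 3 - 1 / (2 * √2 * √(1 - u) ^ 3)

lemma gk_fac (u : ℝ) (hu : 0 ≤ u) : gk u = √2 * √(1 - u) - √(1 - u) * √(1 + u) := by
  unfold gk
  rcases le_or_gt u 1 with h | h
  · rw [← Real.sqrt_mul (by linarith : 0 ≤ 1 - u) (1 + u)]; ring_nf
  · rw [Real.sqrt_eq_zero_of_nonpos (by linarith : 1 - u ≤ 0),
      Real.sqrt_eq_zero_of_nonpos (by nlinarith : 1 - u ^ 2 ≤ 0)]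
    simp

lemma gk1_alt (u : ℝ) (h0 : 0 < u) (h1 : u < 1) :
    gk1 u = u / (√(1 - u) * √(1 + u)) - 1 / (√2 * √(1 - u)) := by
  unfold gk1
  have hp : 0 < √(1 - u) := Real.sqrt_pos.2 (by linarith)
  have hq : 0 < √(1 + u) := Real.sqrt_pos.2 (by linarith)
  have hr : 0 < √2 := Real.sqrt_pos.2 (by norm_num)
  have hp2 : √(1 - u) ^ 2 = 1 - u := Real.sq_sqrt (by linarith)
  have hq2 : √(1 + u) ^ 2 = 1 + u := Real.sq_sqrt (by linarith)
  have hr2 : √2 ^ 2 = 2 := Real.sq_sqrt (by norm_num)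
  have hd : √(1 + u) + √2 * u ≠ 0 := by positivity
  generalize √(1 - u) = p at *
  generalize √(1 + u) = q at *
  generalize √2 = r at *
  field_simp
  ring_nf
  rw [hp2, hq2, hr2]
  ring

lemma kerng : Kern gk gk1 gk2 where
  c0 := by unfold gk; fun_prop
  c1 := by
    unfold gk1
    refine (ContinuousOn.div (by fun_prop) (by fun_prop) ?_).neg
    intro u hu
    have hq : 0 < √(1 + u) := Real.sqrt_pos.2 (by linarith [hu.1])
    have hr : 0 < √2 := Real.sqrt_pos.2 (by norm_num)
    have := hu.1
    positivity
  d0 := by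
    intro u hu
    have hp : 0 < √(1 - u) := Real.sqrt_pos.2 (by linarith [hu.2])
    have hq : 0 < √(1 + u) := Real.sqrt_pos.2 (by linarith [hu.1])
    have hp2 : √(1 - u) ^ 2 = 1 - u := Real.sq_sqrt (by linarith [hu.2])
    have hq2 : √(1 + u) ^ 2 = 1 + u := Real.sq_sqrt (by linarith [hu.1])
    have hr : 0 < √2 := Real.sqrt_pos.2 (by norm_num)
    have hr2 : √2 ^ 2 = 2 := Real.sq_sqrt (by norm_num)
    have D1 := hasDerivAt_sqrt_one_sub u hu.2
    have D2 := hasDerivAt_sqrt_one_add u hu.1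
    have D := (D1.const_mul (√2)).sub (D1.mul D2)
    have D' : HasDerivAt gk _ u := D.congr_of_eventuallyEq (by
      filter_upwards [lt_mem_nhds hu.1] with v hv
      rw [gk_fac v hv.le]; rfl)
    refine D'.congr_deriv ?_
    rw [gk1_alt u hu.1 hu.2]
    generalize √(1 - u) = p at *
    generalize √(1 + u) = q at *
    generalize √2 = r at *
    field_simp
    ring_nf
    rw [hp2, hq2, hr2]
    ring
  d1 := by
    intro u hu
    have hp : 0 < √(1 - u) := Real.sqrt_pos.2 (by linarith [hu.2])
    have hq : 0 < √(1 + u) := Real.sqrt_pos.2 (by linarith [hu.1])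
    have hp2 : √(1 - u) ^ 2 = 1 - u := Real.sq_sqrt (by linarith [hu.2])
    have hq2 : √(1 + u) ^ 2 = 1 + u := Real.sq_sqrt (by linarith [hu.1])
    have hr : 0 < √2 := Real.sqrt_pos.2 (by norm_num)
    have hr2 : √2 ^ 2 = 2 := Real.sq_sqrt (by norm_num)
    have D1 := hasDerivAt_sqrt_one_sub u hu.2
    have D2 := hasDerivAt_sqrt_one_add u hu.1
    have D := ((hasDerivAt_id u).div (D1.mul D2) (by simp; constructor <;> positivity)).sub
      ((D1.const_mul (√2)).inv (by positivity))
    have D' : HasDerivAt gk1 _ u := D.congr_of_eventuallyEq (by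
      filter_upwards [lt_mem_nhds hu.1, gt_mem_nhds hu.2] with v hv hv1
      rw [gk1_alt v hv hv1]; simp)
    refine D'.congr_deriv ?_
    unfold gk2
    simp only [id, Pi.mul_apply]
    generalize √(1 - u) = p at *
    generalize √(1 + u) = q at *
    generalize √2 = r at *
    obtain rfl : u = q ^ 2 - 1 := by linarith
    have hp2' : p ^ 2 = 2 - q ^ 2 := by linarith
    field_simp
    ring_nf
    simp only [hp2']
    ring
  nn := by
    intro u hu
    have hp : 0 < √(1 - u) := Real.sqrt_pos.2 (by linarith [hu.2])
    have hq : 0 < √(1 + u) := Real.sqrt_pos.2 (by linarith [hu.1])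
    have hr : 0 < √2 := Real.sqrt_pos.2 (by norm_num)
    have hr2 : √2 ^ 2 = 2 := Real.sq_sqrt (by norm_num)
    have hqr : √(1 + u) ≤ √2 := Real.sqrt_le_sqrt (by linarith [hu.2])
    unfold gk2
    rw [sub_nonneg]
    apply one_div_le_one_div_of_le (by positivity)
    rw [mul_pow, mul_comm]
    have : √(1 + u) ^ 3 ≤ 2 * √2 := by
      calc _ ≤ √2 ^ 3 := by gcongr
        _ = _ := by rw [pow_succ, hr2]
    gcongr
  e1 := by simp [gk1]
  ez := by
    intro u hu
    simp [gk, Real.sqrt_eq_zero_of_nonpos (by linarith : 1 - u ≤ 0),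
      Real.sqrt_eq_zero_of_nonpos (by nlinarith : 1 - u ^ 2 ≤ 0)]

lemma gk1_zero : gk1 0 = -(1 / √2) := by simp [gk1]

lemma gk_int : ∫ s in (0:ℝ)..1, gk2 s * (s ^ 2) = 2 * (2 * √2 / 3) - π / 2 := by
  rw [intervalIntegral.integral_eq_sub_of_hasDerivAt_of_le
    (f := fun s => s ^ 2 * gk1 s - 2 * s * gk s +
      2 * (-(2 * √2 / 3 * √(1 - s) ^ 3) - 1 / 2 * (s * √(1 - s) * √(1 + s) + arcsin s))) zero_le_one
    _ _ (kerng.mulint (by fun_prop))]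
  · simp [kerng.e1, kerng.ez]; ring
  · have := Real.continuous_arcsin
    have := kerng.c0
    have := kerng.c1
    fun_prop
  · intro u hu
    have hp : 0 < √(1 - u) := Real.sqrt_pos.2 (by linarith [hu.2])
    have hq : 0 < √(1 + u) := Real.sqrt_pos.2 (by linarith [hu.1])
    have hp2 : √(1 - u) ^ 2 = 1 - u := Real.sq_sqrt (by linarith [hu.2])
    have hq2 : √(1 + u) ^ 2 = 1 + u := Real.sq_sqrt (by linarith [hu.1])
    have D1 := hasDerivAt_sqrt_one_sub u hu.2
    have D2 := hasDerivAt_sqrt_one_add u hu.1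
    have A := Real.hasDerivAt_arcsin (x := u) (by linarith [hu.1]) (by linarith [hu.2])
    have hs : √(1 - u ^ 2) = √(1 - u) * √(1 + u) := by
      rw [← Real.sqrt_mul (by linarith [hu.2])]; ring_nf
    rw [hs] at A
    have G := ((((hasDerivAt_id u).pow 2).mul (kerng.d1 u hu)).sub
      (((hasDerivAt_id u).const_mul 2).mul (kerng.d0 u hu)))
    have B := (((D1.pow 3).const_mul (2 * √2 / 3)).neg.sub
      ((((hasDerivAt_id u).mul D1).mul D2).add A |>.const_mul (1 / 2))).const_mul 2
    refine (G.add B).congr_deriv ?_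
    have gf := gk_fac u hu.1.le
    simp only [id, Pi.mul_apply, Pi.pow_apply, gf]
    generalize √(1 - u) = p at *
    generalize √(1 + u) = q at *
    generalize √2 = r at *
    generalize gk1 u = g1 at *
    generalize gk2 u = g2 at *
    obtain rfl : u = q ^ 2 - 1 := by linarith
    have hp2' : p ^ 2 = 2 - q ^ 2 := by linarith
    have hp3 : p ^ 3 = p * (2 - q ^ 2) := by rw [← hp2']; ring
    field_simp
    ring_nf
    simp only [hp2']
    ring

lemma outer_sum (N : ℕ) (T : ℝ) (h0 : 0 ≤ T) (hN : T ≤ (N:ℝ) ^ 2) :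
    |∑ a ∈ Finset.Icc (-(N:ℤ)) N, √(T - (a:ℝ) ^ 2) ^ 3 - 3 * π / 8 * T ^ 2| ≤ 3 * (T + 1) := by
  rcases h0.eq_or_lt with rfl | hT
  · rw [Finset.sum_eq_zero]
    · norm_num
    · intro a _
      rw [Real.sqrt_eq_zero_of_nonpos (by nlinarith [sq_nonneg (a:ℝ)])]; norm_num
  have key := kern32.transfer (Finset.Icc (-(N:ℤ)) N) (fun a => (a:ℝ) ^ 2) (fun _ _ => sq_nonneg _) T hT
    (fun t => 4 / 3 * √t ^ 3) (by fun_prop) (√T + 1) (by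
      intro t _ htT
      refine (one_dim_sum N t (htT.trans hN)).trans ?_
      gcongr)
  have hs : 0 < √T := Real.sqrt_pos.2 hT
  have hs2 : √T ^ 2 = T := Real.sq_sqrt hT.le
  have e1 : ∑ a ∈ Finset.Icc (-(N:ℤ)) N, √(T - (a:ℝ) ^ 2) ^ 3 =
      √T ^ 3 * ∑ a ∈ Finset.Icc (-(N:ℤ)) N, √(1 - (a:ℝ) ^ 2 / T) ^ 3 := by
    rw [Finset.mul_sum]
    refine Finset.sum_congr rfl fun a _ => ?_
    rw [← mul_pow, ← Real.sqrt_mul hT.le]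
    congr 2; field_simp
  have e2 : ∫ s in (0:ℝ)..1, (3 / 4 / √(1 - s)) * (4 / 3 * √(s * T) ^ 3) = √T ^ 3 * (3 * π / 8) := by
    rw [← beta_int, ← intervalIntegral.integral_const_mul]
    congr 1; ext s
    rw [Real.sqrt_mul' _ hT.le]; ring
  rw [e2] at key
  rw [e1]
  generalize ∑ a ∈ Finset.Icc (-(N:ℤ)) N, √(1 - (a:ℝ) ^ 2 / T) ^ 3 = X at *
  generalize √T = q at *
  subst hs2
  have : q ^ 3 * X - 3 * π / 8 * (q ^ 2) ^ 2 = q ^ 3 * (X - 1 / q ^ 2 * (q ^ 3 * (3 * π / 8))) := by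
    field_simp
  rw [this, abs_mul, abs_of_pos (by positivity : 0 < q ^ 3)]
  calc _ ≤ q ^ 3 * ((q + 1) / q ^ 2 * - -(3 / 2 * √(1 - 0))) := by gcongr
    _ = 3 / 2 * (q ^ 2 + q) := by simp; field_simp
    _ ≤ _ := by nlinarith [sq_nonneg (q - 1)]

noncomputable def box (N : ℕ) : Finset (ℤ × ℤ) := Finset.Icc (-(N:ℤ)) N ×ˢ Finset.Icc (-(N:ℤ)) N

lemma card_Icc_symm (N : ℕ) : ((Finset.Icc (-(N:ℤ)) N).card : ℝ) = 2 * N + 1 := by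
  have : (Finset.Icc (-(N:ℤ)) N).card = 2 * N + 1 := by simp; omega
  rw [this]; push_cast; ring

lemma two_sum (N : ℕ) (R T : ℝ) (hR : 1 ≤ R) (h0 : 0 ≤ T) (hTR : T ≤ R) (hN : R ≤ (N:ℝ) ^ 2)
    (hN2 : (N:ℝ) ≤ √R + 1) :
    |∑ p ∈ box N, max (T - ((p.1:ℝ) ^ 2 + (p.2:ℝ) ^ 2)) 0 - π / 2 * T ^ 2| ≤ 18 * R := by
  rw [box, Finset.sum_product]
  have e : ∑ a ∈ Finset.Icc (-(N:ℤ)) N, ∑ b ∈ Finset.Icc (-(N:ℤ)) N,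
      max (T - ((a:ℝ) ^ 2 + (b:ℝ) ^ 2)) 0 - π / 2 * T ^ 2 =
      ∑ a ∈ Finset.Icc (-(N:ℤ)) N, (∑ b ∈ Finset.Icc (-(N:ℤ)) N,
        max (T - (a:ℝ) ^ 2 - (b:ℝ) ^ 2) 0 - 4 / 3 * √(T - (a:ℝ) ^ 2) ^ 3) +
      4 / 3 * (∑ a ∈ Finset.Icc (-(N:ℤ)) N, √(T - (a:ℝ) ^ 2) ^ 3 - 3 * π / 8 * T ^ 2) := by
    rw [Finset.sum_sub_distrib, ← Finset.mul_sum]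
    simp only [sub_sub]
    ring
  have h1 := outer_sum N T h0 (hTR.trans hN)
  have hs : 0 ≤ √R := Real.sqrt_nonneg R
  have hs2 : √R ^ 2 = R := Real.sq_sqrt (by linarith)
  have h2 : |∑ a ∈ Finset.Icc (-(N:ℤ)) N, (∑ b ∈ Finset.Icc (-(N:ℤ)) N,
        max (T - (a:ℝ) ^ 2 - (b:ℝ) ^ 2) 0 - 4 / 3 * √(T - (a:ℝ) ^ 2) ^ 3)| ≤ (2 * N + 1) * (√R + 1) := by
    refine (Finset.abs_sum_le_sum_abs _ _).trans ?_
    rw [← card_Icc_symm, ← nsmul_eq_mul]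
    apply Finset.sum_le_card_nsmul
    intro a _
    have := sq_nonneg (a:ℝ)
    refine (one_dim_sum N (T - (a:ℝ) ^ 2) (by linarith)).trans ?_
    have : √(T - (a:ℝ) ^ 2) ≤ √R := Real.sqrt_le_sqrt (by linarith)
    linarith
  rw [e]
  refine (abs_add_le _ _).trans ?_
  rw [abs_mul, abs_of_pos (by norm_num : (0:ℝ) < 4 / 3)]
  have h3 : (2 * (N:ℝ) + 1) * (√R + 1) ≤ (2 * (√R + 1) + 1) * (√R + 1) := by gcongr
  have : 1 ≤ √R := Real.one_le_sqrt.2 hR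
  nlinarith

lemma main_sum (N : ℕ) (R : ℝ) (hR : 1 ≤ R) (hN : R ≤ (N:ℝ) ^ 2) (hN2 : (N:ℝ) ≤ √R + 1) :
    |∑ p ∈ box N, gk (((p.1:ℝ) ^ 2 + (p.2:ℝ) ^ 2) / R) - R * (π / 2) * (2 * (2 * √2 / 3) - π / 2)|
      ≤ 18 := by
  have hR0 : 0 < R := by linarith
  have key := kerng.transfer (box N) (fun p => (p.1:ℝ) ^ 2 + (p.2:ℝ) ^ 2) (fun _ _ => by positivity) R
    hR0 (fun t => π / 2 * t ^ 2) (by fun_prop) (18 * R) (fun T h0 h1 => two_sum N R T hR h0 h1 hN hN2)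
  have e2 : ∫ s in (0:ℝ)..1, gk2 s * (π / 2 * (s * R) ^ 2) =
      R ^ 2 * (π / 2) * (2 * (2 * √2 / 3) - π / 2) := by
    rw [← gk_int, ← intervalIntegral.integral_const_mul]
    congr 1; ext s; ring
  rw [e2, gk1_zero] at key
  have e3 : 1 / R * (R ^ 2 * (π / 2) * (2 * (2 * √2 / 3) - π / 2)) =
      R * (π / 2) * (2 * (2 * √2 / 3) - π / 2) := by field_simp
  rw [e3] at key
  refine key.trans ?_
  have h1 : 1 ≤ √2 := Real.one_le_sqrt.2 (by norm_num)
  have h2 : 1 / √2 ≤ 1 := by rw [div_le_one (by linarith)]; exact h1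
  have : 18 * R / R = 18 := by field_simp
  rw [this]; linarith

lemma abs_le_of_mem {W : ℕ} {a : ℤ} {y : ℝ} (h : (a:ℝ) ^ 2 ≤ y) (hW : y ≤ (W:ℝ) ^ 2) :
    a ∈ Finset.Icc (-(W:ℤ)) W := by
  have h1 : (a:ℝ) ^ 2 ≤ (W:ℝ) ^ 2 := h.trans hW
  have h2 : a ^ 2 ≤ (W:ℤ) ^ 2 := by exact_mod_cast h1
  rw [Finset.mem_Icc]
  exact abs_le.1 (abs_le_of_sq_le_sq h2 (by positivity))

lemma count_w (W : ℕ) (y : ℝ) (hy : y ≤ (W:ℝ) ^ 2) :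
    |(((Finset.Icc (-(W:ℤ)) W).filter (fun w : ℤ => (w:ℝ) ^ 2 < y)).card : ℝ) - 2 * √y| ≤ 1 := by
  rcases le_or_gt y 0 with h | h
  · rw [Real.sqrt_eq_zero_of_nonpos h, Finset.filter_false_of_mem]
    · simp
    · intro w _; nlinarith [sq_nonneg (w:ℝ)]
  have hs : 0 < √y := Real.sqrt_pos.2 h
  have hc : 0 < ⌈√y⌉ := Int.ceil_pos.2 hs
  have e : (Finset.Icc (-(W:ℤ)) W).filter (fun w : ℤ => (w:ℝ) ^ 2 < y) =
      Finset.Ioo (-⌈√y⌉) ⌈√y⌉ := by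
    ext w
    rw [Finset.mem_filter, Finset.mem_Ioo]
    have hiff : (w:ℝ) ^ 2 < y ↔ -⌈√y⌉ < w ∧ w < ⌈√y⌉ := by
      rw [Real.sq_lt, Int.lt_ceil, neg_lt, neg_lt (a := ⌈√y⌉), Int.lt_ceil]
      push_cast
      rfl
    rw [hiff]
    refine ⟨fun h => h.2, fun h => ⟨abs_le_of_mem (hiff.2 h).le hy, h⟩⟩
  have c : ((Finset.Ioo (-⌈√y⌉) ⌈√y⌉).card : ℤ) = 2 * ⌈√y⌉ - 1 := by
    rw [Int.card_Ioo, Int.toNat_of_nonneg (by omega)]; ring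
  have c' : ((Finset.Ioo (-⌈√y⌉) ⌈√y⌉).card : ℝ) = 2 * ⌈√y⌉ - 1 := by exact_mod_cast c
  rw [e, c', abs_le]
  constructor <;> linarith [Int.le_ceil (√y), Int.ceil_lt_add_one (√y)]

lemma S_eq (N W : ℕ) (x : ℝ) (hW : x ≤ (W:ℝ) ^ 2) (hN : x ≤ ((N:ℝ) ^ 2) ^ 2) :
    S x = ∑ p ∈ box N, ((Finset.Icc (-(W:ℤ)) W).filter
      (fun w : ℤ => (w:ℝ) ^ 2 < x - ((p.1:ℝ) ^ 2 + (p.2:ℝ) ^ 2) ^ 2)).card := by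
  have hset : {p : ℤ × ℤ × ℤ |
    (((p.1 : ℝ) ^ 2 + (p.2.1 : ℝ) ^ 2) ^ 2 + (p.2.2 : ℝ) ^ 2) < x} =
    (((box N).sigma (fun p => (Finset.Icc (-(W:ℤ)) W).filter
      (fun w : ℤ => (w:ℝ) ^ 2 < x - ((p.1:ℝ) ^ 2 + (p.2:ℝ) ^ 2) ^ 2))).image
      (fun q => (q.1.1, q.1.2, q.2)) : Finset (ℤ × ℤ × ℤ)) := by
    ext ⟨a, b, w⟩
    simp only [Set.mem_ofPred_eq, Finset.coe_image, Set.mem_image, Finset.mem_coe, Finset.mem_sigma,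
      Finset.mem_filter]
    constructor
    · intro h
      refine ⟨⟨(a, b), w⟩, ⟨?_, ?_, by simp only; linarith⟩, rfl⟩
      · have h1 : ((a:ℝ) ^ 2 + (b:ℝ) ^ 2) ^ 2 ≤ ((N:ℝ) ^ 2) ^ 2 := by nlinarith [sq_nonneg (w:ℝ)]
        have h2 := le_of_sq_le_sq h1 (by positivity)
        rw [box, Finset.mem_product]
        exact ⟨abs_le_of_mem (by simp; nlinarith [sq_nonneg (b:ℝ)]) le_rfl,
          abs_le_of_mem (by simp; nlinarith [sq_nonneg (a:ℝ)]) le_rfl⟩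
      · exact abs_le_of_mem (y := x) (by nlinarith [sq_nonneg ((a:ℝ) ^ 2 + (b:ℝ) ^ 2)]) hW
    · rintro ⟨⟨⟨a', b'⟩, w'⟩, ⟨_, _, h⟩, e⟩
      simp only [Prod.mk.injEq] at e h
      obtain ⟨rfl, rfl, rfl⟩ := e
      linarith
  rw [S, hset, Set.ncard_coe_finset, Finset.card_image_of_injective, Finset.card_sigma]
  rintro ⟨⟨a, b⟩, w⟩ ⟨⟨a', b'⟩, w'⟩ h
  simp only [Prod.mk.injEq] at h
  obtain ⟨rfl, rfl, rfl⟩ := h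
  rfl

lemma r2_eq (N : ℕ) (m : ℕ) (hN : (m:ℝ) ≤ (N:ℝ) ^ 2) :
    r2 m = ((box N).filter (fun p => (p.1 ^ 2 + p.2 ^ 2).toNat = m)).card := by
  rw [r2, ← Set.ncard_coe_finset]
  congr 1
  ext ⟨a, b⟩
  have ha := sq_nonneg a
  have hb := sq_nonneg b
  simp only [Set.mem_ofPred_eq, Finset.coe_filter]
  constructor
  · intro h
    have h' : (a:ℝ) ^ 2 + (b:ℝ) ^ 2 = m := by exact_mod_cast h
    refine ⟨?_, by omega⟩
    rw [box, Finset.mem_product]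
    exact ⟨abs_le_of_mem (by simp; nlinarith [sq_nonneg (b:ℝ)]) hN,
          abs_le_of_mem (by simp; nlinarith [sq_nonneg (a:ℝ)]) hN⟩
  · rintro ⟨_, h⟩
    omega

lemma r2_sum_s14 (N : ℕ) (R : ℝ) (hR : 0 ≤ R) (hN : R ≤ (N:ℝ) ^ 2) :
    ∑ m ∈ Finset.range (⌊R⌋₊ + 1), (r2 m : ℝ) * (R - m) ^ ((1 : ℝ) / 2) =
      ∑ p ∈ box N, √(R - ((p.1:ℝ) ^ 2 + (p.2:ℝ) ^ 2)) := by
  have hc : ∀ p : ℤ × ℤ, (((p.1 ^ 2 + p.2 ^ 2).toNat : ℕ) : ℝ) = (p.1:ℝ) ^ 2 + (p.2:ℝ) ^ 2 := by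
    intro p
    have : (((p.1 ^ 2 + p.2 ^ 2).toNat : ℕ) : ℤ) = p.1 ^ 2 + p.2 ^ 2 :=
      Int.toNat_of_nonneg (by positivity)
    exact_mod_cast this
  have e : ∑ p ∈ box N, √(R - ((p.1:ℝ) ^ 2 + (p.2:ℝ) ^ 2)) =
      ∑ p ∈ (box N).filter (fun p => (p.1 ^ 2 + p.2 ^ 2).toNat ∈ Finset.range (⌊R⌋₊ + 1)),
        √(R - ((p.1:ℝ) ^ 2 + (p.2:ℝ) ^ 2)) := by
    symm
    apply Finset.sum_subset (Finset.filter_subset _ _)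
    intro p hp hnp
    rw [Finset.mem_filter, not_and] at hnp
    have h1 := hnp hp
    rw [Finset.mem_range, not_lt] at h1
    apply Real.sqrt_eq_zero_of_nonpos
    have : R < (((p.1 ^ 2 + p.2 ^ 2).toNat : ℕ) : ℝ) := Nat.lt_of_floor_lt (by omega)
    rw [hc] at this
    linarith
  rw [e, Finset.sum_filter, ← Finset.sum_filter,
    ← Finset.sum_fiberwise_of_maps_to (t := Finset.range (⌊R⌋₊ + 1))
      (g := fun p : ℤ × ℤ => (p.1 ^ 2 + p.2 ^ 2).toNat) (fun p hp => (Finset.mem_filter.1 hp).2)]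
  refine Finset.sum_congr rfl fun m hm => ?_
  have hm' : (m:ℝ) ≤ R := by
    rw [Finset.mem_range, Nat.lt_succ_iff] at hm
    exact (Nat.le_floor_iff hR).1 hm
  rw [r2_eq N m (hm'.trans hN), Finset.filter_filter, ← nsmul_eq_mul, ← Finset.sum_const]
  have hf : (box N).filter (fun p => (p.1 ^ 2 + p.2 ^ 2).toNat ∈ Finset.range (⌊R⌋₊ + 1) ∧
      (p.1 ^ 2 + p.2 ^ 2).toNat = m) = (box N).filter (fun p => (p.1 ^ 2 + p.2 ^ 2).toNat = m) := by
    apply Finset.filter_congr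
    intro p _
    constructor
    · exact fun h => h.2
    · rintro rfl; exact ⟨hm, rfl⟩
  rw [hf]
  refine Finset.sum_congr rfl fun p hp => ?_
  rw [← Real.sqrt_eq_rpow, ← hc, (Finset.mem_filter.1 hp).2]

/-- There are `C > 0` and `x₀ ≥ 1` such that for all `x ≥ x₀`,
`|E(x) − 2·x^{1/2}·Q(√x)| ≤ C·x^{1/2}`. -/
theorem E_approx_Q :
    ∃ C : ℝ, 0 < C ∧ ∃ x₀ : ℝ, 1 ≤ x₀ ∧ ∀ x : ℝ, x₀ ≤ x →
      |E x - 2 * x ^ ((1 : ℝ) / 2) * Q x| ≤ C * x ^ ((1 : ℝ) / 2) := by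
  refine ⟨100, by norm_num, 1, le_rfl, fun x hx => ?_⟩
  have hx0 : 0 < x := by linarith
  have c1 : 2 * x ^ ((1 : ℝ) / 2) * Q x = 2 * (Sx0 x - 2 ^ ((3 : ℝ) / 2) * π / 3 * x) := by
    have : x ^ ((1 : ℝ) / 2) * x ^ (-(1 : ℝ) / 2) = 1 := by
      rw [← Real.rpow_add hx0]; norm_num
    unfold Q
    linear_combination 2 * (Sx0 x - 2 ^ ((3 : ℝ) / 2) * π / 3 * x) * this
  have c2 : (2:ℝ) ^ ((3 : ℝ) / 2) = 2 * √2 := by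
    rw [show (3:ℝ) / 2 = 1 + 1 / 2 by norm_num, Real.rpow_add (by norm_num), ← Real.sqrt_eq_rpow]
    simp
  have c3 : x ^ ((1 : ℝ) / 4) = √(√x) := by
    rw [Real.sqrt_eq_rpow, Real.sqrt_eq_rpow, ← Real.rpow_mul hx0.le]; norm_num
  rw [c1, c2, ← Real.sqrt_eq_rpow, E, Sx0, c3]
  obtain ⟨R, hR⟩ : ∃ R, R = √x := ⟨_, rfl⟩
  have hxR : x = R ^ 2 := by rw [hR, Real.sq_sqrt hx0.le]
  have hR1 : 1 ≤ R := by rw [hR]; exact Real.one_le_sqrt.2 hx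
  have hR0 : 0 < R := by linarith
  rw [← hR]
  set q := √R with hq
  have hq1 : 1 ≤ q := Real.one_le_sqrt.2 hR1
  have hq2 : q ^ 2 = R := Real.sq_sqrt hR0.le
  obtain ⟨N, hN⟩ : ∃ N : ℕ, N = ⌊q⌋₊ + 1 := ⟨_, rfl⟩
  have hNq : q ≤ N := by rw [hN]; push_cast; exact (Nat.lt_floor_add_one q).le
  have hNq2 : (N:ℝ) ≤ q + 1 := by
    rw [hN]; push_cast; linarith [Nat.floor_le (by linarith : 0 ≤ q)]
  have hRN : R ≤ (N:ℝ) ^ 2 := by rw [← hq2]; gcongr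
  have hW : R ≤ (⌈R⌉₊ : ℝ) := Nat.le_ceil R
  have hW2 : x ≤ (⌈R⌉₊ : ℝ) ^ 2 := by rw [hxR]; gcongr
  rw [r2_sum_s14 N R hR0.le hRN, S_eq N ⌈R⌉₊ x hW2 (by rw [hxR]; gcongr)]
  push_cast
  have m1 := main_sum N R hR1 hRN hNq2
  have t1 : |∑ p ∈ box N, ((((Finset.Icc (-(⌈R⌉₊:ℤ)) ⌈R⌉₊).filter
      (fun w : ℤ => (w:ℝ) ^ 2 < x - ((p.1:ℝ) ^ 2 + (p.2:ℝ) ^ 2) ^ 2)).card : ℝ) -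
      2 * √(x - ((p.1:ℝ) ^ 2 + (p.2:ℝ) ^ 2) ^ 2))| ≤ (2 * N + 1) * (2 * N + 1) := by
    refine (Finset.abs_sum_le_sum_abs _ _).trans ?_
    have hcard : ((box N).card : ℝ) = (2 * N + 1) * (2 * N + 1) := by
      rw [box, Finset.card_product]; push_cast; rw [card_Icc_symm]
    rw [← hcard, ← mul_one ((box N).card : ℝ), ← nsmul_eq_mul]
    apply Finset.sum_le_card_nsmul
    intro p _
    exact count_w _ _ (by nlinarith [sq_nonneg ((p.1:ℝ) ^ 2 + (p.2:ℝ) ^ 2)])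
  have t2 : ∑ p ∈ box N, gk (((p.1:ℝ) ^ 2 + (p.2:ℝ) ^ 2) / R) * R =
      √2 * q * ∑ p ∈ box N, √(R - ((p.1:ℝ) ^ 2 + (p.2:ℝ) ^ 2)) -
      ∑ p ∈ box N, √(x - ((p.1:ℝ) ^ 2 + (p.2:ℝ) ^ 2) ^ 2) := by
    rw [Finset.mul_sum, ← Finset.sum_sub_distrib]
    refine Finset.sum_congr rfl fun p _ => ?_
    generalize (p.1:ℝ) ^ 2 + (p.2:ℝ) ^ 2 = m
    have a1 : √(R - m) = q * √(1 - m / R) := by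
      rw [hq, ← Real.sqrt_mul hR0.le]; congr 1; field_simp
    have a2 : √(x - m ^ 2) = R * √(1 - (m / R) ^ 2) := by
      rw [← Real.sqrt_sq hR0.le, ← Real.sqrt_mul (sq_nonneg R), Real.sqrt_sq hR0.le]
      congr 1; rw [hxR]; field_simp
    rw [a1, a2, gk]
    linear_combination (-√2 * √(1 - m / R)) * hq2
  rw [← Finset.sum_mul] at t2
  rw [Finset.sum_sub_distrib, ← Finset.mul_sum] at t1
  generalize ∑ p ∈ box N, gk (((p.1:ℝ) ^ 2 + (p.2:ℝ) ^ 2) / R) = G at *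
  generalize ∑ p ∈ box N, √(R - ((p.1:ℝ) ^ 2 + (p.2:ℝ) ^ 2)) = A at *
  generalize ∑ p ∈ box N, √(x - ((p.1:ℝ) ^ 2 + (p.2:ℝ) ^ 2) ^ 2) = B at *
  generalize ∑ p ∈ box N, (((Finset.Icc (-(⌈R⌉₊:ℤ)) ⌈R⌉₊).filter
      (fun w : ℤ => (w:ℝ) ^ 2 < x - ((p.1:ℝ) ^ 2 + (p.2:ℝ) ^ 2) ^ 2)).card : ℝ) = F at *
  have fin : F - π ^ 2 / 2 * x - 2 * (√2 * q * A - 2 * √2 * π / 3 * x) =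
      (F - 2 * B) - 2 * R * (G - R * (π / 2) * (2 * (2 * √2 / 3) - π / 2)) := by
    rw [hxR]
    linear_combination 2 * t2
  rw [fin]
  refine (abs_sub _ _).trans ?_
  rw [abs_mul, abs_of_pos (by linarith : 0 < 2 * R)]
  have : 2 * R * |G - R * (π / 2) * (2 * (2 * √2 / 3) - π / 2)| ≤ 2 * R * 18 := by gcongr
  have h3 : (2 * (N:ℝ) + 1) * (2 * N + 1) ≤ (2 * (q + 1) + 1) * (2 * (q + 1) + 1) := by gcongr
  nlinarith
end
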